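/- arXiv:1807.07736 — 6 statements merged into one kernel-verified Lean document; each statement's English description precedes it below -/
import Mathlib

section
/- Let γ, γ̄ : I → ℝ² be two smooth unit-speed spacelike curves on the Minkowski plane with positive pointing tangent vector fields, and suppose they have the same curvature function κ (i.e. T′ = κN and T̄′ = κN̄, where T = γ′, N = J′T, T̄ = γ̄′, N̄ = J′T̄). Then there exist a matrix A ∈ SO(1,1) and a vector v ∈ ℝ² such that γ̄(x) = A γ(x) + v for all x ∈ I. -/
/-!
The tangents `T`, `T̄` solve the same linear system `u' = κ J' u`. So does `J' T`, and since `J'` is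
traceless, the area `wedge u w` spanned by two solutions is constant (Liouville). As
`wedge T (J' T) = ⟨T, T⟩ ≠ 0`, the pair `T`, `J' T` is a fundamental system, so a solution vanishing
at one point vanishes identically.

Fix `p ∈ I` and write `T̄ p` in the basis `T p`, `J' (T p)`. This gives a matrix `A = α + β J'` with
`A (T p) = T̄ p`; it commutes with `J'`, so `T̄ - A T` is a solution vanishing at `p`. Hence
`γ̄ - A γ` is constant. Finally `det A = 1` because `T` and `T̄` have the same speed, and a matrix
commuting with `J'` scales the Lorentzian form by its determinant.
-/

open Matrix

section Wedge

variable {R : Type*} [CommRing R]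

/-- The standard area form on the plane `R²`: the determinant of the matrix with columns `v`
and `w`. -/
def wedge (v w : Fin 2 → R) : R :=
  v 0 * w 1 - v 1 * w 0

theorem wedge_zero_left (w : Fin 2 → R) : wedge 0 w = 0 := by
  simp [wedge]

theorem wedge_zero_right (v : Fin 2 → R) : wedge v 0 = 0 := by
  simp [wedge]

theorem wedge_smul_eq_add (u v w : Fin 2 → R) :
    wedge v w • u = wedge u w • v + wedge v u • w := by
  ext i
  fin_cases i <;> simp [wedge] <;> ring

theorem wedge_mulVec_mulVec (A : Matrix (Fin 2) (Fin 2) R) (v w : Fin 2 → R) :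
    wedge (A *ᵥ v) (A *ᵥ w) = A.det * wedge v w := by
  simp only [wedge, mulVec_eq_sum, Fin.sum_univ_two, det_fin_two, Pi.add_apply, Pi.smul_apply,
    transpose_apply, MulOpposite.smul_eq_mul_unop, MulOpposite.unop_op]
  ring

theorem wedge_mulVec_add_wedge_mulVec (A : Matrix (Fin 2) (Fin 2) R) (v w : Fin 2 → R) :
    wedge (A *ᵥ v) w + wedge v (A *ᵥ w) = A.trace * wedge v w := by
  simp only [wedge, mulVec_eq_sum, Fin.sum_univ_two, trace_fin_two, Pi.add_apply, Pi.smul_apply,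
    transpose_apply, MulOpposite.smul_eq_mul_unop, MulOpposite.unop_op]
  ring

theorem exists_commute_det_eq_one_mulVec_eq {K : Type*} [Field K] {J : Matrix (Fin 2) (Fin 2) K}
    {v w : Fin 2 → K} (hv : wedge v (J *ᵥ v) ≠ 0)
    (hvw : wedge w (J *ᵥ w) = wedge v (J *ᵥ v)) :
    ∃ A : Matrix (Fin 2) (Fin 2) K, Commute A J ∧ A.det = 1 ∧ A *ᵥ v = w := by
  set q := wedge v (J *ᵥ v)
  let A := q⁻¹ • (wedge w (J *ᵥ v) • (1 : Matrix (Fin 2) (Fin 2) K) + wedge v w • J)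
  have hAJ : Commute A J :=
    (((Commute.one_left J).smul_left _).add_left ((Commute.refl J).smul_left _)).smul_left _
  have hAv : A *ᵥ v = w := by
    simp only [A, smul_mulVec, add_mulVec, one_mulVec, ← wedge_smul_eq_add]
    exact inv_smul_smul₀ hv w
  refine ⟨A, hAJ, mul_right_cancel₀ hv ?_, hAv⟩
  calc A.det * q = wedge (A *ᵥ v) (A *ᵥ (J *ᵥ v)) := (wedge_mulVec_mulVec A v _).symm
    _ = wedge w (J *ᵥ w) := by rw [mulVec_mulVec, hAJ.eq, ← mulVec_mulVec, hAv]
    _ = 1 * q := by rw [hvw, one_mul]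

end Wedge

section Lorentz

variable {R : Type*} [CommRing R]

/-- The matrix `J'` of the Minkowski plane, which takes the tangent of a curve to its normal. -/
def lorentzJ : Matrix (Fin 2) (Fin 2) R :=
  !![0, 1; 1, 0]

theorem trace_lorentzJ : (lorentzJ : Matrix (Fin 2) (Fin 2) R).trace = 0 := by
  simp [lorentzJ, trace_fin_two]

theorem lorentzJ_mulVec (v : Fin 2 → R) : lorentzJ *ᵥ v = ![v 1, v 0] := by
  ext i
  fin_cases i <;> simp [lorentzJ, mulVec_eq_sum]

theorem wedge_lorentzJ_mulVec (v : Fin 2 → R) :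
    wedge v (lorentzJ *ᵥ v) = v 0 * v 0 - v 1 * v 1 := by
  rw [lorentzJ_mulVec]
  rfl

theorem transpose_mul_mul_eq_det_smul_of_commute_lorentzJ {A : Matrix (Fin 2) (Fin 2) R}
    (hA : Commute A lorentzJ) :
    Aᵀ * !![1, 0; 0, -1] * A = A.det • !![1, 0; 0, -1] := by
  have area_scales : Aᵀ * !![0, 1; -1, 0] * A = A.det • !![0, 1; -1, 0] := by
    ext i j
    fin_cases i <;> fin_cases j <;> simp [mul_apply, Fin.sum_univ_two, det_fin_two] <;> ring
  have form_eq : (!![1, 0; 0, -1] : Matrix (Fin 2) (Fin 2) R) =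
      !![0, 1; -1, 0] * lorentzJ := by
    simp [lorentzJ]
  rw [form_eq, mul_assoc, mul_assoc, ← hA.eq, ← mul_assoc, ← mul_assoc, area_scales, smul_mul]

end Lorentz

/-- `u` solves the linear system `u' = M u` at every point of `I`. No regularity is imposed on the
coefficients `M`. -/
def IsLinearSolutionOn {n : Type*} [Fintype n] (M : ℝ → Matrix n n ℝ) (u : ℝ → n → ℝ)
    (I : Set ℝ) : Prop :=
  ∀ x ∈ I, HasDerivAt u (M x *ᵥ u x) x

theorem hasDerivAt_mulVec {m n : Type*} [Finite m] [Fintype n] (A : Matrix m n ℝ)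
    {u : ℝ → n → ℝ} {u' : n → ℝ} {x : ℝ} (hu : HasDerivAt u u' x) :
    HasDerivAt (fun y => A *ᵥ u y) (A *ᵥ u') x := by
  cases nonempty_fintype m
  exact A.mulVecLin.toContinuousLinearMap.hasFDerivAt.comp_hasDerivAt x hu

theorem hasDerivAt_wedge {u w : ℝ → Fin 2 → ℝ} {u' w' : Fin 2 → ℝ} {x : ℝ}
    (hu : HasDerivAt u u' x) (hw : HasDerivAt w w' x) :
    HasDerivAt (fun y => wedge (u y) (w y)) (wedge u' (w x) + wedge (u x) w') x := by
  rw [hasDerivAt_pi] at hu hw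
  refine (((hu 0).mul (hw 1)).sub ((hu 1).mul (hw 0))).congr_deriv ?_
  simp only [wedge]
  ring

namespace IsLinearSolutionOn

variable {I : Set ℝ}

section AnyDimension

variable {n : Type*} [Fintype n] {M : ℝ → Matrix n n ℝ} {u w : ℝ → n → ℝ}

theorem sub (hu : IsLinearSolutionOn M u I) (hw : IsLinearSolutionOn M w I) :
    IsLinearSolutionOn M (u - w) I := fun x hx =>
  ((hu x hx).sub (hw x hx)).congr_deriv (mulVec_sub (M x) (u x) (w x)).symm

theorem mulVec (hu : IsLinearSolutionOn M u I) {A : Matrix n n ℝ}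
    (hA : ∀ x ∈ I, Commute A (M x)) : IsLinearSolutionOn M (fun x => A *ᵥ u x) I := fun x hx =>
  (hasDerivAt_mulVec A (hu x hx)).congr_deriv (by
    rw [mulVec_mulVec, (hA x hx).eq, ← mulVec_mulVec])

end AnyDimension

variable {M : ℝ → Matrix (Fin 2) (Fin 2) ℝ} {u v w : ℝ → Fin 2 → ℝ}

theorem wedge_eq (hI : IsOpen I) (hI' : IsPreconnected I) (hM : ∀ x ∈ I, (M x).trace = 0)
    (hu : IsLinearSolutionOn M u I) (hw : IsLinearSolutionOn M w I) {x p : ℝ} (hx : x ∈ I)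
    (hp : p ∈ I) : wedge (u x) (w x) = wedge (u p) (w p) := by
  have hderiv : ∀ y ∈ I, HasDerivAt (fun y => wedge (u y) (w y)) 0 y := fun y hy =>
    (hasDerivAt_wedge (hu y hy) (hw y hy)).congr_deriv (by
      rw [wedge_mulVec_add_wedge_mulVec, hM y hy, zero_mul])
  exact hI.is_const_of_deriv_eq_zero hI'
    (fun y hy => (hderiv y hy).differentiableAt.differentiableWithinAt)
    (fun y hy => (hderiv y hy).deriv) hx hp

-- `M` need not be locally bounded, so uniqueness of solutions via Grönwall is not available.
theorem eq_zero_of_wedge_ne_zero (hI : IsOpen I) (hI' : IsPreconnected I)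
    (hM : ∀ x ∈ I, (M x).trace = 0) (hu : IsLinearSolutionOn M u I)
    (hv : IsLinearSolutionOn M v I) (hw : IsLinearSolutionOn M w I) {p : ℝ} (hp : p ∈ I)
    (hvw : wedge (v p) (w p) ≠ 0) (hup : u p = 0) {x : ℝ} (hx : x ∈ I) : u x = 0 := by
  have huw : wedge (u x) (w x) = 0 := by
    rw [wedge_eq hI hI' hM hu hw hx hp, hup, wedge_zero_left]
  have hvu : wedge (v x) (u x) = 0 := by
    rw [wedge_eq hI hI' hM hv hu hx hp, hup, wedge_zero_right]
  have hne : wedge (v x) (w x) ≠ 0 := by rwa [wedge_eq hI hI' hM hv hw hx hp]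
  refine (smul_eq_zero.mp ?_).resolve_left hne
  rw [wedge_smul_eq_add, huw, hvu, zero_smul, zero_smul, add_zero]

theorem exists_eq_mulVec_of_wedge_eq (hI : IsOpen I) (hI' : IsPreconnected I)
    {κ : ℝ → ℝ} {J : Matrix (Fin 2) (Fin 2) ℝ} (hJ : J.trace = 0)
    (hu : IsLinearSolutionOn (fun x => κ x • J) u I)
    (hw : IsLinearSolutionOn (fun x => κ x • J) w I) {p : ℝ} (hp : p ∈ I)
    (hup : wedge (u p) (J *ᵥ u p) ≠ 0)
    (huw : wedge (w p) (J *ᵥ w p) = wedge (u p) (J *ᵥ u p)) :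
    ∃ A : Matrix (Fin 2) (Fin 2) ℝ, Commute A J ∧ A.det = 1 ∧ ∀ x ∈ I, w x = A *ᵥ u x := by
  obtain ⟨A, hAJ, hdet, hAp⟩ := exists_commute_det_eq_one_mulVec_eq hup huw
  have hJu : IsLinearSolutionOn (fun x => κ x • J) (fun x => J *ᵥ u x) I :=
    hu.mulVec fun x _ => (Commute.refl J).smul_right (κ x)
  have hAu : IsLinearSolutionOn (fun x => κ x • J) (fun x => A *ᵥ u x) I :=
    hu.mulVec fun x _ => hAJ.smul_right (κ x)
  have htrace : ∀ x ∈ I, (κ x • J).trace = 0 := fun x _ => by rw [trace_smul, hJ, smul_zero]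
  exact ⟨A, hAJ, hdet, fun x hx => sub_eq_zero.mp <|
    (hw.sub hAu).eq_zero_of_wedge_ne_zero hI hI' htrace hu hJu hp hup
      (sub_eq_zero.mpr hAp.symm) hx⟩

end IsLinearSolutionOn

theorem exists_eq_mulVec_add_of_deriv_eq {m n : Type*} [Finite m] [Fintype n] {I : Set ℝ}
    (hI : IsOpen I) (hI' : IsPreconnected I) (A : Matrix m n ℝ) {γ : ℝ → n → ℝ}
    {γbar : ℝ → m → ℝ} (hγ : DifferentiableOn ℝ γ I) (hγbar : DifferentiableOn ℝ γbar I)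
    (hderiv : ∀ x ∈ I, deriv γbar x = A *ᵥ deriv γ x) :
    ∃ v : m → ℝ, ∀ x ∈ I, γbar x = A *ᵥ γ x + v := by
  cases nonempty_fintype m
  have hAγ : ∀ x ∈ I, HasDerivAt (fun y => A *ᵥ γ y) (A *ᵥ deriv γ x) x := fun x hx =>
    hasDerivAt_mulVec A (hγ.hasDerivAt (hI.mem_nhds hx))
  exact hI.exists_eq_add_of_deriv_eq hI' hγbar
    (fun x hx => (hAγ x hx).differentiableAt.differentiableWithinAt)
    (fun x hx => (hderiv x hx).trans (hAγ x hx).deriv.symm)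

theorem isLinearSolutionOn_deriv_of_curvature {I : Set ℝ} (hI : IsOpen I)
    {γ : ℝ → Fin 2 → ℝ} {κ : ℝ → ℝ} (hγ : ContDiffOn ℝ 2 γ I)
    (hcurv : ∀ x ∈ I, deriv (deriv γ) x = κ x • ![deriv γ x 1, deriv γ x 0]) :
    IsLinearSolutionOn (fun x => κ x • lorentzJ) (deriv γ) I := fun x hx => by
  have hγ' : ContDiffOn ℝ 1 (deriv γ) I := hγ.deriv_of_isOpen hI one_add_one_eq_two.le
  rw [smul_mulVec, lorentzJ_mulVec, ← hcurv x hx]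
  exact (hγ'.differentiableOn one_ne_zero).hasDerivAt (hI.mem_nhds hx)

theorem stmt_1_general {I : Set ℝ} (hIo : IsOpen I) (hIc : IsPreconnected I)
    {γ γbar : ℝ → Fin 2 → ℝ} {κ : ℝ → ℝ}
    (hγ : ContDiffOn ℝ 2 γ I) (hγbar : ContDiffOn ℝ 2 γbar I)
    (hnonnull : ∀ x ∈ I, deriv γ x 0 * deriv γ x 0 - deriv γ x 1 * deriv γ x 1 ≠ 0)
    (hspeed : ∀ x ∈ I, deriv γbar x 0 * deriv γbar x 0 - deriv γbar x 1 * deriv γbar x 1 =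
      deriv γ x 0 * deriv γ x 0 - deriv γ x 1 * deriv γ x 1)
    (hcurv : ∀ x ∈ I, deriv (deriv γ) x = κ x • ![deriv γ x 1, deriv γ x 0])
    (hcurvbar : ∀ x ∈ I, deriv (deriv γbar) x = κ x • ![deriv γbar x 1, deriv γbar x 0]) :
    ∃ A : Matrix (Fin 2) (Fin 2) ℝ, ∃ v : Fin 2 → ℝ,
      A.transpose * !![(1 : ℝ), 0; 0, -1] * A = !![(1 : ℝ), 0; 0, -1] ∧ A.det = 1 ∧
      ∀ x ∈ I, γbar x = A.mulVec (γ x) + v := by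
  obtain rfl | ⟨p, hp⟩ := I.eq_empty_or_nonempty
  · exact ⟨1, 0, by simp⟩
  have hT := isLinearSolutionOn_deriv_of_curvature hIo hγ hcurv
  have hTbar := isLinearSolutionOn_deriv_of_curvature hIo hγbar hcurvbar
  simp only [← wedge_lorentzJ_mulVec] at hnonnull hspeed
  obtain ⟨A, hAJ, hdet, hA⟩ := hT.exists_eq_mulVec_of_wedge_eq hIo hIc trace_lorentzJ
    hTbar hp (hnonnull p hp) (hspeed p hp)
  obtain ⟨v, hv⟩ := exists_eq_mulVec_add_of_deriv_eq hIo hIc A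
    (hγ.differentiableOn two_ne_zero) (hγbar.differentiableOn two_ne_zero) hA
  refine ⟨A, v, ?_, hdet, hv⟩
  rw [transpose_mul_mul_eq_det_smul_of_commute_lorentzJ hAJ, hdet, one_smul]

/-- Two smooth unit-speed spacelike curves on the Minkowski plane with
positive pointing tangent vector fields and the same curvature `κ` differ only by
a Lorentzian motion: there exist `A ∈ SO(1,1)` and `v ∈ ℝ²` with `γ̄ = A γ + v` on `I`. -/
theorem stmt_1 (I : Set ℝ) (hIo : IsOpen I) (hIc : IsPreconnected I)
    (γ γbar : ℝ → Fin 2 → ℝ) (κ : ℝ → ℝ)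
    (hγ : ContDiffOn ℝ (⊤ : ℕ∞) γ I) (hγbar : ContDiffOn ℝ (⊤ : ℕ∞) γbar I)
    (hunit : ∀ x ∈ I, deriv γ x 0 * deriv γ x 0 - deriv γ x 1 * deriv γ x 1 = 1)
    (hunitbar : ∀ x ∈ I, deriv γbar x 0 * deriv γbar x 0 - deriv γbar x 1 * deriv γbar x 1 = 1)
    (hpos : ∀ x ∈ I, 0 < deriv γ x 0)
    (hposbar : ∀ x ∈ I, 0 < deriv γbar x 0)
    (hcurv : ∀ x ∈ I, deriv (deriv γ) x = κ x • ![deriv γ x 1, deriv γ x 0])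
    (hcurvbar : ∀ x ∈ I, deriv (deriv γbar) x = κ x • ![deriv γbar x 1, deriv γbar x 0]) :
    ∃ A : Matrix (Fin 2) (Fin 2) ℝ, ∃ v : Fin 2 → ℝ,
      A.transpose * !![(1 : ℝ), 0; 0, -1] * A = !![(1 : ℝ), 0; 0, -1] ∧ A.det = 1 ∧
      ∀ x ∈ I, γbar x = A.mulVec (γ x) + v := by
  exact stmt_1_general hIo hIc (contDiffOn_infty.mp hγ 2) (contDiffOn_infty.mp hγbar 2)
    (fun x hx => (hunit x hx).trans_ne one_ne_zero)
    (fun x hx => (hunitbar x hx).trans (hunit x hx).symm) hcurv hcurvbar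
end

section
/- Let θ : ℝ² → ℝ be smooth, let γ : ℝ² → ℝ² be smooth with γ_x(x,t) = T(x,t) = (cosh θ(x,t), sinh θ(x,t)), and set N = (sinh θ, cosh θ) and κ = θ_x. If γ satisfies the defocusing mKdV flow γ_t = −(κ²/2) T + κ_x N for all (x,t), then θ satisfies θ_t = κ_{xx} − (1/2)κ³, i.e. the potential defocusing mKdV equation θ_t = θ_{xxx} − (1/2)θ_x³, and consequently the curvature κ satisfies the defocusing mKdV equation κ_t = κ_{xxx} − (3/2)κ² κ_x. -/
/-!
Since `T_θ = N` and `N_θ = T`, comparing the `N`-components of `γ_{xt} = γ_{tx}` for a flow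
`γ_t = a T + b N` gives `θ_t = b_x + a θ_x`; with `a = -κ²/2` and `b = κ_x` this is the potential
equation, whose `x`-derivative is the equation for `κ`.

When `θ` and `γ` are merely `C²`, the higher derivatives of `κ` exist because the flow equation
exhibits `κ_x` as the `C¹` function `-⟨γ_t, N⟩`, and then the potential equation exhibits `κ_{xx}`
as the `C¹` function `θ_t + κ³/2`.
-/

section PartialDerivatives

variable {𝕜 E : Type*} [NontriviallyNormedField 𝕜] [NormedAddCommGroup E] [NormedSpace 𝕜 E]

theorem hasDerivAt_slice_fst {F : 𝕜 × 𝕜 → E} {x t : 𝕜} (hF : DifferentiableAt 𝕜 F (x, t)) :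
    HasDerivAt (fun x' => F (x', t)) (fderiv 𝕜 F (x, t) (1, 0)) x :=
  hF.hasFDerivAt.comp_hasDerivAt x ((hasDerivAt_id x).prodMk (hasDerivAt_const x t))

theorem hasDerivAt_slice_snd {F : 𝕜 × 𝕜 → E} {x t : 𝕜} (hF : DifferentiableAt 𝕜 F (x, t)) :
    HasDerivAt (fun t' => F (x, t')) (fderiv 𝕜 F (x, t) (0, 1)) t :=
  hF.hasFDerivAt.comp_hasDerivAt t ((hasDerivAt_const t x).prodMk (hasDerivAt_id t))

variable {f : 𝕜 → 𝕜 → E}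

theorem hasDerivAt_deriv_fst (hf : Differentiable 𝕜 fun p : 𝕜 × 𝕜 => f p.1 p.2) (x t : 𝕜) :
    HasDerivAt (fun x' => f x' t) (deriv (fun x' => f x' t) x) x :=
  (hasDerivAt_slice_fst (hf (x, t))).differentiableAt.hasDerivAt

theorem hasDerivAt_deriv_snd (hf : Differentiable 𝕜 fun p : 𝕜 × 𝕜 => f p.1 p.2) (x t : 𝕜) :
    HasDerivAt (fun t' => f x t') (deriv (fun t' => f x t') t) t :=
  (hasDerivAt_slice_snd (hf (x, t))).differentiableAt.hasDerivAt

theorem deriv_fst_eq_fderiv (hf : Differentiable 𝕜 fun p : 𝕜 × 𝕜 => f p.1 p.2) (x t : 𝕜) :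
    deriv (fun x' => f x' t) x = fderiv 𝕜 (fun p : 𝕜 × 𝕜 => f p.1 p.2) (x, t) (1, 0) :=
  (hasDerivAt_slice_fst (hf (x, t))).deriv

theorem deriv_snd_eq_fderiv (hf : Differentiable 𝕜 fun p : 𝕜 × 𝕜 => f p.1 p.2) (x t : 𝕜) :
    deriv (fun t' => f x t') t = fderiv 𝕜 (fun p : 𝕜 × 𝕜 => f p.1 p.2) (x, t) (0, 1) :=
  (hasDerivAt_slice_snd (hf (x, t))).deriv

variable {m n : WithTop ℕ∞}

theorem contDiff_deriv_fst (hf : ContDiff 𝕜 n fun p : 𝕜 × 𝕜 => f p.1 p.2) (hmn : m + 1 ≤ n) :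
    ContDiff 𝕜 m fun p : 𝕜 × 𝕜 => deriv (fun x' => f x' p.2) p.1 := by
  have hdiff := hf.differentiable (by rintro rfl; simp at hmn)
  simp only [deriv_fst_eq_fderiv hdiff]
  exact (hf.fderiv_right hmn).clm_apply contDiff_const

theorem contDiff_deriv_snd (hf : ContDiff 𝕜 n fun p : 𝕜 × 𝕜 => f p.1 p.2) (hmn : m + 1 ≤ n) :
    ContDiff 𝕜 m fun p : 𝕜 × 𝕜 => deriv (fun t' => f p.1 t') p.2 := by
  have hdiff := hf.differentiable (by rintro rfl; simp at hmn)
  simp only [deriv_snd_eq_fderiv hdiff]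
  exact (hf.fderiv_right hmn).clm_apply contDiff_const

theorem deriv_deriv_comm (hf : ContDiff 𝕜 n fun p : 𝕜 × 𝕜 => f p.1 p.2)
    (hn : minSmoothness 𝕜 2 ≤ n) (x t : 𝕜) :
    deriv (fun t' => deriv (fun x' => f x' t') x) t =
      deriv (fun x' => deriv (fun t' => f x' t') t) x := by
  have hf₂ : ContDiff 𝕜 2 fun p : 𝕜 × 𝕜 => f p.1 p.2 := hf.of_le (le_minSmoothness.trans hn)
  have hdiff := hf₂.differentiable two_ne_zero
  have hdiff' := (hf₂.fderiv_right (m := 1) one_add_one_eq_two.le).differentiable one_ne_zero (x, t)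
  simp only [deriv_fst_eq_fderiv hdiff, deriv_snd_eq_fderiv hdiff]
  rw [((hasDerivAt_slice_snd hdiff').clm_apply (hasDerivAt_const t _)).deriv,
    ((hasDerivAt_slice_fst hdiff').clm_apply (hasDerivAt_const x _)).deriv]
  simpa using (hf.contDiffAt.isSymmSndFDerivAt hn).eq (0, 1) (1, 0)

end PartialDerivatives

section HyperbolicFrame

/-- The Lorentzian inner product of the Minkowski plane `ℝ^{1,1}`, with signature `(+, -)`. -/
def lorentzInner (v w : ℝ × ℝ) : ℝ := v.1 * w.1 - v.2 * w.2

/-- The unit spacelike vector `T = (cosh φ, sinh φ)`, the tangent of a curve with potential `φ`. -/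
noncomputable def hyperbolicTangent (φ : ℝ) : ℝ × ℝ := (Real.cosh φ, Real.sinh φ)

/-- The unit timelike vector `N = (sinh φ, cosh φ)`, the normal of a curve with potential `φ`. -/
noncomputable def hyperbolicNormal (φ : ℝ) : ℝ × ℝ := (Real.sinh φ, Real.cosh φ)

theorem lorentzInner_frame_normal (a b φ : ℝ) :
    lorentzInner (a • hyperbolicTangent φ + b • hyperbolicNormal φ) (hyperbolicNormal φ) = -b := by
  simp only [lorentzInner, hyperbolicTangent, hyperbolicNormal, Prod.smul_mk, Prod.mk_add_mk,
    smul_eq_mul]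
  linear_combination -b * Real.cosh_sq_sub_sinh_sq φ

theorem lorentzInner_smul_normal_normal (b φ : ℝ) :
    lorentzInner (b • hyperbolicNormal φ) (hyperbolicNormal φ) = -b := by
  simpa using lorentzInner_frame_normal 0 b φ

theorem hasDerivAt_hyperbolicTangent_comp {φ : ℝ → ℝ} {φ' s : ℝ} (hφ : HasDerivAt φ φ' s) :
    HasDerivAt (fun s => hyperbolicTangent (φ s)) (φ' • hyperbolicNormal (φ s)) s := by
  simpa [hyperbolicTangent, hyperbolicNormal, mul_comm] using hφ.cosh.prodMk hφ.sinh

theorem hasDerivAt_hyperbolicNormal_comp {φ : ℝ → ℝ} {φ' s : ℝ} (hφ : HasDerivAt φ φ' s) :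
    HasDerivAt (fun s => hyperbolicNormal (φ s)) (φ' • hyperbolicTangent (φ s)) s := by
  simpa [hyperbolicTangent, hyperbolicNormal, mul_comm] using hφ.sinh.prodMk hφ.cosh

theorem hasDerivAt_frame_combination {a b φ : ℝ → ℝ} {a' b' φ' s : ℝ} (ha : HasDerivAt a a' s)
    (hb : HasDerivAt b b' s) (hφ : HasDerivAt φ φ' s) :
    HasDerivAt (fun s => a s • hyperbolicTangent (φ s) + b s • hyperbolicNormal (φ s))
      ((a' + b s * φ') • hyperbolicTangent (φ s) + (b' + a s * φ') • hyperbolicNormal (φ s)) s := by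
  refine ((ha.smul (hasDerivAt_hyperbolicTangent_comp hφ)).add
    (hb.smul (hasDerivAt_hyperbolicNormal_comp hφ))).congr_deriv ?_
  module

end HyperbolicFrame

section FrameFlow

variable {θ a b : ℝ → ℝ → ℝ} {γ : ℝ → ℝ → ℝ × ℝ}

theorem contDiff_normal_coefficient {m n : WithTop ℕ∞}
    (hθ : ContDiff ℝ m fun p : ℝ × ℝ => θ p.1 p.2)
    (hγ : ContDiff ℝ n fun p : ℝ × ℝ => γ p.1 p.2) (hmn : m + 1 ≤ n)
    (hflow : ∀ x t, deriv (fun t' => γ x t') t =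
      a x t • hyperbolicTangent (θ x t) + b x t • hyperbolicNormal (θ x t)) :
    ContDiff ℝ m fun p : ℝ × ℝ => b p.1 p.2 := by
  have hb : ∀ x t, b x t =
      -lorentzInner (deriv (fun t' => γ x t') t) (hyperbolicNormal (θ x t)) := fun x t => by
    rw [hflow, lorentzInner_frame_normal, neg_neg]
  simp only [hb, lorentzInner, hyperbolicNormal]
  have hγt := contDiff_deriv_snd hγ hmn
  exact ((hγt.fst.mul hθ.sinh).sub (hγt.snd.mul hθ.cosh)).neg

theorem deriv_potential_eq_of_frame_flow {x t a' b' : ℝ}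
    (hθ : Differentiable ℝ fun p : ℝ × ℝ => θ p.1 p.2)
    (hγ : ContDiff ℝ 2 fun p : ℝ × ℝ => γ p.1 p.2)
    (hT : ∀ x t, deriv (fun x' => γ x' t) x = hyperbolicTangent (θ x t))
    (hflow : ∀ x t, deriv (fun t' => γ x t') t =
      a x t • hyperbolicTangent (θ x t) + b x t • hyperbolicNormal (θ x t))
    (ha : HasDerivAt (fun x' => a x' t) a' x) (hb : HasDerivAt (fun x' => b x' t) b' x) :
    deriv (fun t' => θ x t') t = b' + a x t * deriv (fun x' => θ x' t) x := by
  have hcompat := deriv_deriv_comm hγ (by simp) x t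
  simp only [hT, hflow] at hcompat
  rw [(hasDerivAt_hyperbolicTangent_comp (hasDerivAt_deriv_snd hθ x t)).deriv,
    (hasDerivAt_frame_combination ha hb (hasDerivAt_deriv_fst hθ x t)).deriv] at hcompat
  have hnormal := congrArg (lorentzInner · (hyperbolicNormal (θ x t))) hcompat
  simpa only [lorentzInner_smul_normal_normal, lorentzInner_frame_normal, neg_inj] using hnormal

end FrameFlow

section DefocusingMKdV

variable {θ κ : ℝ → ℝ → ℝ}

theorem potential_mkdv_of_mkdv_flow {γ : ℝ → ℝ → ℝ × ℝ}
    (hθ : ContDiff ℝ 2 fun p : ℝ × ℝ => θ p.1 p.2)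
    (hγ : ContDiff ℝ 2 fun p : ℝ × ℝ => γ p.1 p.2)
    (hT : ∀ x t, deriv (fun x' => γ x' t) x = hyperbolicTangent (θ x t))
    (hκ : ∀ x t, κ x t = deriv (fun x' => θ x' t) x)
    (hflow : ∀ x t, deriv (fun t' => γ x t') t = (-(κ x t ^ 2 / 2)) • hyperbolicTangent (θ x t) +
      deriv (fun x' => κ x' t) x • hyperbolicNormal (θ x t)) (x t : ℝ) :
    deriv (fun t' => θ x t') t =
      deriv (fun x' => deriv (fun x'' => κ x'' t) x') x - (1 / 2) * κ x t ^ 3 := by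
  have hκ_contDiff : ContDiff ℝ 1 fun p : ℝ × ℝ => κ p.1 p.2 := by
    simpa only [hκ] using contDiff_deriv_fst hθ one_add_one_eq_two.le
  have hκx_contDiff : ContDiff ℝ 1 fun p : ℝ × ℝ => deriv (fun x' => κ x' p.2) p.1 :=
    contDiff_normal_coefficient (b := fun x t => deriv (fun x' => κ x' t) x)
      (hθ.of_le one_le_two) hγ one_add_one_eq_two.le hflow
  have hκx := hasDerivAt_deriv_fst (hκ_contDiff.differentiable one_ne_zero) x t
  have hκxx := hasDerivAt_deriv_fst (f := fun x t => deriv (fun x' => κ x' t) x)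
    (hκx_contDiff.differentiable one_ne_zero) x t
  rw [deriv_potential_eq_of_frame_flow (hθ.differentiable two_ne_zero) hγ hT hflow
    ((hκx.fun_pow 2).div_const 2).fun_neg hκxx, ← hκ]
  ring

theorem mkdv_of_potential_mkdv (hθ : ContDiff ℝ 2 fun p : ℝ × ℝ => θ p.1 p.2)
    (hκ : ∀ x t, κ x t = deriv (fun x' => θ x' t) x)
    (hpotential : ∀ x t, deriv (fun t' => θ x t') t =
      deriv (fun x' => deriv (fun x'' => κ x'' t) x') x - (1 / 2) * κ x t ^ 3) (x t : ℝ) :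
    deriv (fun t' => κ x t') t =
      deriv (fun x' => deriv (fun x'' => deriv (fun s => κ s t) x'') x') x
        - (3 / 2) * κ x t ^ 2 * deriv (fun x' => κ x' t) x := by
  have hκ_contDiff : ContDiff ℝ 1 fun p : ℝ × ℝ => κ p.1 p.2 := by
    simpa only [hκ] using contDiff_deriv_fst hθ one_add_one_eq_two.le
  have hκx := hasDerivAt_deriv_fst (hκ_contDiff.differentiable one_ne_zero) x t
  have hκxx : ∀ x t, deriv (fun x' => deriv (fun x'' => κ x'' t) x') x =
      deriv (fun t' => θ x t') t + (1 / 2) * κ x t ^ 3 := fun x t =>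
    sub_eq_iff_eq_add.mp (hpotential x t).symm
  have hκxx_contDiff : ContDiff ℝ 1 fun p : ℝ × ℝ =>
      deriv (fun x' => deriv (fun x'' => κ x'' p.2) x') p.1 := by
    simp only [hκxx]
    exact (contDiff_deriv_snd hθ one_add_one_eq_two.le).add
      (contDiff_const.mul (hκ_contDiff.pow 3))
  have hκxxx := hasDerivAt_deriv_fst
    (f := fun x t => deriv (fun x' => deriv (fun x'' => κ x'' t) x') x)
    (hκxx_contDiff.differentiable one_ne_zero) x t
  calc deriv (fun t' => κ x t') t
      = deriv (fun x' => deriv (fun t' => θ x' t') t) x := by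
        simpa only [hκ] using deriv_deriv_comm hθ (by simp) x t
    _ = deriv (fun x' => deriv (fun x'' => deriv (fun s => κ s t) x'') x'
          - (1 / 2) * κ x' t ^ 3) x := by simp only [hpotential]
    _ = _ := by
        rw [(hκxxx.fun_sub ((hκx.fun_pow 3).const_mul (1 / 2))).deriv]
        ring

end DefocusingMKdV

theorem stmt_4_general (θ : ℝ → ℝ → ℝ) (γ : ℝ → ℝ → ℝ × ℝ) (κ : ℝ → ℝ → ℝ)
    (hθ : ContDiff ℝ 2 (fun p : ℝ × ℝ => θ p.1 p.2))
    (hγ : ContDiff ℝ 2 (fun p : ℝ × ℝ => γ p.1 p.2))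
    (hT : ∀ x t, deriv (fun x' => γ x' t) x = (Real.cosh (θ x t), Real.sinh (θ x t)))
    (hκ : ∀ x t, κ x t = deriv (fun x' => θ x' t) x)
    (hflow : ∀ x t, deriv (fun t' => γ x t') t =
      (-(κ x t ^ 2 / 2) * Real.cosh (θ x t) + deriv (fun x' => κ x' t) x * Real.sinh (θ x t),
       -(κ x t ^ 2 / 2) * Real.sinh (θ x t) + deriv (fun x' => κ x' t) x * Real.cosh (θ x t))) :
    (∀ x t, deriv (fun t' => θ x t') t =
      deriv (fun x' => deriv (fun x'' => κ x'' t) x') x - (1 / 2) * κ x t ^ 3) ∧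
    (∀ x t, deriv (fun t' => θ x t') t =
      deriv (fun x' => deriv (fun x'' => deriv (fun s => θ s t) x'') x') x
        - (1 / 2) * (deriv (fun x' => θ x' t) x) ^ 3) ∧
    (∀ x t, deriv (fun t' => κ x t') t =
      deriv (fun x' => deriv (fun x'' => deriv (fun s => κ s t) x'') x') x
        - (3 / 2) * κ x t ^ 2 * deriv (fun x' => κ x' t) x) := by
  have hpotential := potential_mkdv_of_mkdv_flow hθ hγ hT hκ hflow
  exact ⟨hpotential, fun x t => by simpa only [hκ] using hpotential x t,
    mkdv_of_potential_mkdv hθ hκ hpotential⟩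

/-- If a smooth family of curves `γ(x,t)` with tangent
`γ_x = (cosh θ, sinh θ)`, normal `N = (sinh θ, cosh θ)` and curvature `κ = θ_x`
satisfies the defocusing mKdV flow `γ_t = -(κ²/2) T + κ_x N`, then
`θ_t = κ_{xx} - κ³/2`, i.e. the potential defocusing mKdV equation
`θ_t = θ_{xxx} - (1/2)θ_x³` holds, and `κ` satisfies the defocusing mKdV equation
`κ_t = κ_{xxx} - (3/2)κ²κ_x`. -/
theorem stmt_4 (θ : ℝ → ℝ → ℝ) (γ : ℝ → ℝ → ℝ × ℝ) (κ : ℝ → ℝ → ℝ)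
    (hθ : ContDiff ℝ (⊤ : ℕ∞) (fun p : ℝ × ℝ => θ p.1 p.2))
    (hγ : ContDiff ℝ (⊤ : ℕ∞) (fun p : ℝ × ℝ => γ p.1 p.2))
    (hT : ∀ x t, deriv (fun x' => γ x' t) x = (Real.cosh (θ x t), Real.sinh (θ x t)))
    (hκ : ∀ x t, κ x t = deriv (fun x' => θ x' t) x)
    (hflow : ∀ x t, deriv (fun t' => γ x t') t =
      (-(κ x t ^ 2 / 2) * Real.cosh (θ x t) + deriv (fun x' => κ x' t) x * Real.sinh (θ x t),
       -(κ x t ^ 2 / 2) * Real.sinh (θ x t) + deriv (fun x' => κ x' t) x * Real.cosh (θ x t))) :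
    (∀ x t, deriv (fun t' => θ x t') t =
      deriv (fun x' => deriv (fun x'' => κ x'' t) x') x - (1 / 2) * κ x t ^ 3) ∧
    (∀ x t, deriv (fun t' => θ x t') t =
      deriv (fun x' => deriv (fun x'' => deriv (fun s => θ s t) x'') x') x
        - (1 / 2) * (deriv (fun x' => θ x' t) x) ^ 3) ∧
    (∀ x t, deriv (fun t' => κ x t') t =
      deriv (fun x' => deriv (fun x'' => deriv (fun s => κ s t) x'') x') x
        - (3 / 2) * κ x t ^ 2 * deriv (fun x' => κ x' t) x) :=
  stmt_4_general θ γ κ (contDiff_infty.mp hθ 2) (contDiff_infty.mp hγ 2) hT hκ hflow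
end

section
/- Let τ = τ(x,t,y) and τ̄ = τ̄(x,t,y) be smooth positive real-valued functions satisfying the bilinear equations D_x D_y τ·τ = −2 τ̄² and D_x D_y τ̄·τ̄ = −2 τ². Define θ = 2 log(τ/τ̄) and γ = (1/2)( −∂_y log(τ τ̄), ∂_y log(τ/τ̄) ). Then for every (x,t,y), γ_x = (cosh θ, sinh θ); in particular γ(·,t,y) is a unit-speed spacelike curve on the Minkowski plane with positive pointing tangent and potential function θ. -/
/-!
Since `D_x D_y u·u = 2 (u u_{xy} - u_x u_y)`, one has `(log u)_{xy} = D_x D_y u·u / (2 u²)`.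
The bilinear equations therefore say `(log τ)_{xy} = -(τ̄/τ)²` and `(log τ̄)_{xy} = -(τ/τ̄)²`,
while `e^θ = (τ/τ̄)²`. Hence `γ_x` has entries `((τ/τ̄)² ± (τ̄/τ)²)/2`, that is, `cosh θ` and
`sinh θ`. The time `t` is only a parameter.
-/

open Function Topology

section MixedPartials

variable {E : Type*} [NormedAddCommGroup E] [NormedSpace ℝ E] {u : ℝ → ℝ → E} {x y : ℝ}

theorem hasDerivAt_prodMk_left (x y : ℝ) : HasDerivAt (fun x' : ℝ => (x', y)) (1, 0) x :=
  (hasDerivAt_id' x).prodMk (hasDerivAt_const x y)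

theorem hasDerivAt_prodMk_right (x y : ℝ) : HasDerivAt (fun y' : ℝ => (x, y')) (0, 1) y :=
  (hasDerivAt_const y x).prodMk (hasDerivAt_id' y)

theorem hasDerivAt_left_of_differentiableAt_uncurry
    (hu : DifferentiableAt ℝ (uncurry u) (x, y)) :
    HasDerivAt (fun x' => u x' y) (fderiv ℝ (uncurry u) (x, y) (1, 0)) x :=
  hu.hasFDerivAt.comp_hasDerivAt (l := uncurry u) x (hasDerivAt_prodMk_left x y)

theorem hasDerivAt_right_of_differentiableAt_uncurry
    (hu : DifferentiableAt ℝ (uncurry u) (x, y)) :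
    HasDerivAt (u x) (fderiv ℝ (uncurry u) (x, y) (0, 1)) y :=
  hu.hasFDerivAt.comp_hasDerivAt y (hasDerivAt_prodMk_right x y)

theorem hasDerivAt_deriv_right_of_contDiffAt_uncurry (hu : ContDiffAt ℝ 2 (uncurry u) (x, y)) :
    HasDerivAt (fun x' => deriv (u x') y) (deriv (fun y' => deriv (fun x' => u x' y') x) y) x := by
  set U := uncurry u
  have hU_near : ∀ᶠ p in 𝓝 (x, y), DifferentiableAt ℝ U p :=
    (hu.eventually (by simp)).mono fun p hp => hp.differentiableAt two_ne_zero
  have hU' : HasFDerivAt (fderiv ℝ U) (fderiv ℝ (fderiv ℝ U) (x, y)) (x, y) :=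
    ((hu.fderiv_right (m := 1) le_rfl).differentiableAt one_ne_zero).hasFDerivAt
  have hU'_apply (v : ℝ × ℝ) := (ContinuousLinearMap.apply ℝ E v).hasFDerivAt.comp (x, y) hU'
  have h_uy : (fun x' => deriv (u x') y) =ᶠ[𝓝 x] fun x' => fderiv ℝ U (x', y) (0, 1) :=
    ((hasDerivAt_prodMk_left x y).continuousAt.eventually hU_near).mono fun x' h =>
      (hasDerivAt_right_of_differentiableAt_uncurry h).deriv
  have h_ux : (fun y' => deriv (fun x' => u x' y') x) =ᶠ[𝓝 y]
      fun y' => fderiv ℝ U (x, y') (1, 0) :=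
    ((hasDerivAt_prodMk_right x y).continuousAt.eventually hU_near).mono fun y' h =>
      (hasDerivAt_left_of_differentiableAt_uncurry h).deriv
  have h_uyx : HasDerivAt (fun x' => deriv (u x') y)
      (fderiv ℝ (fderiv ℝ U) (x, y) (1, 0) (0, 1)) x :=
    ((hU'_apply (0, 1)).comp_hasDerivAt x (hasDerivAt_prodMk_left x y)).congr_of_eventuallyEq h_uy
  have h_uxy : HasDerivAt (fun y' => deriv (fun x' => u x' y') x)
      (fderiv ℝ (fderiv ℝ U) (x, y) (0, 1) (1, 0)) y :=
    ((hU'_apply (1, 0)).comp_hasDerivAt y (hasDerivAt_prodMk_right x y)).congr_of_eventuallyEq h_ux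
  have h_symm : IsSymmSndFDerivAt ℝ U (x, y) := hu.isSymmSndFDerivAt (by simp)
  rw [h_uxy.deriv, ← h_symm (1, 0) (0, 1)]
  exact h_uyx

end MixedPartials

section Hirota

/-- Hirota's bilinear operator `D_x D_y f·g` for functions of two real variables. Each mixed
partial derivative is taken first in `x`, then in `y`. -/
noncomputable def hirotaDxDy (f g : ℝ → ℝ → ℝ) (x y : ℝ) : ℝ :=
  deriv (fun y' => deriv (fun x' => f x' y') x) y * g x y
    - deriv (fun x' => f x' y) x * deriv (fun y' => g x y') y
    - deriv (fun y' => f x y') y * deriv (fun x' => g x' y) x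
    + f x y * deriv (fun y' => deriv (fun x' => g x' y') x) y

variable {u : ℝ → ℝ → ℝ} {x y : ℝ}

theorem hasDerivAt_logDeriv_right (hu : ContDiffAt ℝ 2 (uncurry u) (x, y)) (hne : u x y ≠ 0) :
    HasDerivAt (fun x' => logDeriv (u x') y) (hirotaDxDy u u x y / (2 * u x y ^ 2)) x := by
  have h_ux : HasDerivAt (fun x' => u x' y) (deriv (fun x' => u x' y) x) x :=
    (hasDerivAt_left_of_differentiableAt_uncurry
      (hu.differentiableAt two_ne_zero)).differentiableAt.hasDerivAt
  have h_quot := (hasDerivAt_deriv_right_of_contDiffAt_uncurry hu).div h_ux hne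
  refine h_quot.congr_deriv ?_
  unfold hirotaDxDy
  field_simp
  ring

theorem hasDerivAt_logDeriv_right_of_hirotaDxDy_eq {c : ℝ}
    (hu : ContDiffAt ℝ 2 (uncurry u) (x, y)) (hne : u x y ≠ 0)
    (h_bilinear : hirotaDxDy u u x y = -2 * c ^ 2) :
    HasDerivAt (fun x' => logDeriv (u x') y) (-(c / u x y) ^ 2) x := by
  refine (hasDerivAt_logDeriv_right hu hne).congr_deriv ?_
  rw [h_bilinear]
  field_simp

end Hirota

section Logarithm

variable {f g : ℝ → ℝ} {y r : ℝ}

theorem deriv_log_mul_eq_logDeriv_add (hf : DifferentiableAt ℝ f y) (hg : DifferentiableAt ℝ g y)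
    (hf₀ : f y ≠ 0) (hg₀ : g y ≠ 0) :
    deriv (fun y' => Real.log (f y' * g y')) y = logDeriv f y + logDeriv g y :=
  (Real.deriv_log_comp_eq_logDeriv (hf.mul hg) (mul_ne_zero hf₀ hg₀)).trans
    (logDeriv_mul y hf₀ hg₀ hf hg)

theorem deriv_log_div_eq_logDeriv_sub (hf : DifferentiableAt ℝ f y) (hg : DifferentiableAt ℝ g y)
    (hf₀ : f y ≠ 0) (hg₀ : g y ≠ 0) :
    deriv (fun y' => Real.log (f y' / g y')) y = logDeriv f y - logDeriv g y :=
  (Real.deriv_log_comp_eq_logDeriv (hf.div hg hg₀) (div_ne_zero hf₀ hg₀)).trans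
    (logDeriv_div y hf₀ hg₀ hf hg)

theorem cosh_two_mul_log (hr : r ≠ 0) :
    Real.cosh (2 * Real.log r) = (r ^ 2 + r⁻¹ ^ 2) / 2 := by
  rw [inv_pow, ← Real.cosh_log (sq_pos_of_ne_zero hr), Real.log_pow, Nat.cast_ofNat]

theorem sinh_two_mul_log (hr : r ≠ 0) :
    Real.sinh (2 * Real.log r) = (r ^ 2 - r⁻¹ ^ 2) / 2 := by
  rw [inv_pow, ← Real.sinh_log (sq_pos_of_ne_zero hr), Real.log_pow, Nat.cast_ofNat]

end Logarithm

section TauCurve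

/-- The potential function `θ = 2 log (τ/τ̄)` of the tau functions `τ`, `τ̄`. -/
noncomputable def tauPotential (τ τb : ℝ → ℝ → ℝ) (x y : ℝ) : ℝ :=
  2 * Real.log (τ x y / τb x y)

/-- The plane curve `γ = (1/2) (-∂_y log (τ τ̄), ∂_y log (τ/τ̄))` of the tau functions `τ`, `τ̄`,
with curve parameter `x` and deformation parameter `y`. -/
noncomputable def tauCurve (τ τb : ℝ → ℝ → ℝ) (x y : ℝ) : ℝ × ℝ :=
  (-(1 / 2) * deriv (fun y' => Real.log (τ x y' * τb x y')) y,
   (1 / 2) * deriv (fun y' => Real.log (τ x y' / τb x y')) y)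

variable {τ τb : ℝ → ℝ → ℝ}

theorem tauCurve_eq_logDeriv (x y : ℝ) (hτ : DifferentiableAt ℝ (τ x) y)
    (hτb : DifferentiableAt ℝ (τb x) y) (hτ₀ : τ x y ≠ 0) (hτb₀ : τb x y ≠ 0) :
    tauCurve τ τb x y =
      (-(1 / 2) * (logDeriv (τ x) y + logDeriv (τb x) y),
       (1 / 2) * (logDeriv (τ x) y - logDeriv (τb x) y)) := by
  rw [tauCurve, deriv_log_mul_eq_logDeriv_add hτ hτb hτ₀ hτb₀,
    deriv_log_div_eq_logDeriv_sub hτ hτb hτ₀ hτb₀]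

theorem hasDerivAt_tauCurve (hτ : ContDiff ℝ 2 (uncurry τ)) (hτb : ContDiff ℝ 2 (uncurry τb))
    (hτ₀ : ∀ x y, τ x y ≠ 0) (hτb₀ : ∀ x y, τb x y ≠ 0) {x y : ℝ}
    (h_bilinear : hirotaDxDy τ τ x y = -2 * τb x y ^ 2)
    (h_bilinear_bar : hirotaDxDy τb τb x y = -2 * τ x y ^ 2) :
    HasDerivAt (fun x' => tauCurve τ τb x' y)
      (Real.cosh (tauPotential τ τb x y), Real.sinh (tauPotential τ τb x y)) x := by
  have h_logDeriv := hasDerivAt_logDeriv_right_of_hirotaDxDy_eq hτ.contDiffAt (hτ₀ x y) h_bilinear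
  have h_logDeriv_bar :=
    hasDerivAt_logDeriv_right_of_hirotaDxDy_eq hτb.contDiffAt (hτb₀ x y) h_bilinear_bar
  have h_curve : (fun x' => tauCurve τ τb x' y) = fun x' =>
      (-(1 / 2) * (logDeriv (τ x') y + logDeriv (τb x') y),
       (1 / 2) * (logDeriv (τ x') y - logDeriv (τb x') y)) :=
    funext fun x' => tauCurve_eq_logDeriv x' y
      (hasDerivAt_right_of_differentiableAt_uncurry
        (hτ.differentiable two_ne_zero (x', y))).differentiableAt
      (hasDerivAt_right_of_differentiableAt_uncurry
        (hτb.differentiable two_ne_zero (x', y))).differentiableAt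
      (hτ₀ x' y) (hτb₀ x' y)
  have h_ratio : τ x y / τb x y ≠ 0 := div_ne_zero (hτ₀ x y) (hτb₀ x y)
  rw [h_curve]
  refine (((h_logDeriv.fun_add h_logDeriv_bar).const_mul (-(1 / 2))).prodMk
    ((h_logDeriv.fun_sub h_logDeriv_bar).const_mul (1 / 2))).congr_deriv ?_
  rw [tauPotential, cosh_two_mul_log h_ratio, sinh_two_mul_log h_ratio, inv_div]
  ext <;> ring

end TauCurve

/-- The Lorentzian inner product of the Minkowski plane `ℝ^{1,1}`, with signature `(+, -)`. -/
def minkowskiInner (v w : ℝ × ℝ) : ℝ := v.1 * w.1 - v.2 * w.2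

theorem minkowskiInner_cosh_sinh_self (φ : ℝ) :
    minkowskiInner (Real.cosh φ, Real.sinh φ) (Real.cosh φ, Real.sinh φ) = 1 := by
  rw [minkowskiInner, ← sq, ← sq, Real.cosh_sq_sub_sinh_sq]

theorem stmt_5_general {τ τb : ℝ → ℝ → ℝ}
    (hτ : ContDiff ℝ 2 (uncurry τ)) (hτb : ContDiff ℝ 2 (uncurry τb))
    (hτpos : ∀ x y, 0 < τ x y) (hτbpos : ∀ x y, 0 < τb x y) {x y : ℝ}
    (h_bilinear : hirotaDxDy τ τ x y = -2 * τb x y ^ 2)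
    (h_bilinear_bar : hirotaDxDy τb τb x y = -2 * τ x y ^ 2) :
    let γx := deriv (fun x' => tauCurve τ τb x' y) x
    γx = (Real.cosh (tauPotential τ τb x y), Real.sinh (tauPotential τ τb x y)) ∧
      minkowskiInner γx γx = 1 ∧ 0 < γx.1 := by
  intro γx
  have hγx : γx = (Real.cosh (tauPotential τ τb x y), Real.sinh (tauPotential τ τb x y)) :=
    (hasDerivAt_tauCurve hτ hτb (fun x y => (hτpos x y).ne') (fun x y => (hτbpos x y).ne')
      h_bilinear h_bilinear_bar).deriv
  rw [hγx]
  exact ⟨rfl, minkowskiInner_cosh_sinh_self _, Real.cosh_pos _⟩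

/-- For smooth positive `τ(x,t,y)`, `τ̄(x,t,y)` satisfying the bilinear
equations `D_x D_y τ·τ = -2 τ̄²` and `D_x D_y τ̄·τ̄ = -2 τ²`, with
`θ = 2 log(τ/τ̄)` and `γ = (1/2)(-∂_y log(τ τ̄), ∂_y log(τ/τ̄))`, one has
`γ_x = (cosh θ, sinh θ)` everywhere; in particular `γ(·,t,y)` is a unit-speed
spacelike curve with positive pointing tangent and potential function `θ`. -/
theorem stmt_5 (τ τb : ℝ → ℝ → ℝ → ℝ) (θ : ℝ → ℝ → ℝ → ℝ) (γ : ℝ → ℝ → ℝ → ℝ × ℝ)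
    (hτ : ContDiff ℝ (⊤ : ℕ∞) (fun p : ℝ × ℝ × ℝ => τ p.1 p.2.1 p.2.2))
    (hτb : ContDiff ℝ (⊤ : ℕ∞) (fun p : ℝ × ℝ × ℝ => τb p.1 p.2.1 p.2.2))
    (hτpos : ∀ x t y, 0 < τ x t y) (hτbpos : ∀ x t y, 0 < τb x t y)
    (hbil1 : ∀ x t y,
      (deriv (fun y' => deriv (fun x' => τ x' t y') x) y) * τ x t y
        - (deriv (fun x' => τ x' t y) x) * (deriv (fun y' => τ x t y') y)
        - (deriv (fun y' => τ x t y') y) * (deriv (fun x' => τ x' t y) x)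
        + τ x t y * (deriv (fun y' => deriv (fun x' => τ x' t y') x) y)
      = -2 * (τb x t y) ^ 2)
    (hbil2 : ∀ x t y,
      (deriv (fun y' => deriv (fun x' => τb x' t y') x) y) * τb x t y
        - (deriv (fun x' => τb x' t y) x) * (deriv (fun y' => τb x t y') y)
        - (deriv (fun y' => τb x t y') y) * (deriv (fun x' => τb x' t y) x)
        + τb x t y * (deriv (fun y' => deriv (fun x' => τb x' t y') x) y)
      = -2 * (τ x t y) ^ 2)
    (hθ : ∀ x t y, θ x t y = 2 * Real.log (τ x t y / τb x t y))
    (hγ : ∀ x t y, γ x t y =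
      (-(1 / 2) * deriv (fun y' => Real.log (τ x t y' * τb x t y')) y,
       (1 / 2) * deriv (fun y' => Real.log (τ x t y' / τb x t y')) y)) :
    ∀ x t y,
      deriv (fun x' => γ x' t y) x = (Real.cosh (θ x t y), Real.sinh (θ x t y)) ∧
      (deriv (fun x' => γ x' t y) x).1 * (deriv (fun x' => γ x' t y) x).1
        - (deriv (fun x' => γ x' t y) x).2 * (deriv (fun x' => γ x' t y) x).2 = 1 ∧
      0 < (deriv (fun x' => γ x' t y) x).1 := by
  intro x t y
  have h_slice : ContDiff ℝ 2 fun p : ℝ × ℝ => (p.1, t, p.2) := by fun_prop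
  have hγ_slice : (fun x' => γ x' t y) = fun x' => tauCurve (τ · t ·) (τb · t ·) x' y :=
    funext fun x' => hγ x' t y
  rw [hγ_slice, hθ]
  exact stmt_5_general (τ := (τ · t ·)) (τb := (τb · t ·))
    ((hτ.of_le (by norm_cast)).comp h_slice) ((hτb.of_le (by norm_cast)).comp h_slice)
    (hτpos · t ·) (hτbpos · t ·) (hbil1 x t y) (hbil2 x t y)
end

section
/- Let c ∈ ℝ and let τ = τ(x,t) and τ̄ = τ̄(x,t) be smooth positive real-valued functions satisfying the bilinear equations (D_x² − c) τ·τ̄ = 0 and (D_x³ − D_t − 3c D_x) τ·τ̄ = 0. Then θ = 2 log(τ/τ̄) satisfies the potential defocusing mKdV equation θ_t = θ_{xxx} − (1/2)θ_x³. -/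
/-!
Put `φ = log (τ / τ̄)` and `ψ = log (τ τ̄)`. Dividing a Hirota derivative of `τ·τ̄` by `τ τ̄` leaves
a differential polynomial in `φ` and `ψ`:
`D_x ↦ φ_x`, `D_x² ↦ ψ_xx + φ_x²`, `D_x³ ↦ φ_xxx + 3 φ_x ψ_xx + φ_x³`.
The first bilinear equation is thus `ψ_xx = c - φ_x²`, and eliminating `ψ_xx` from the second one
leaves `φ_t = φ_xxx - 2 φ_x³`, which is the potential mKdV equation for `θ = 2 φ`. Below, `φ_x` and
`ψ_x` appear as `logDeriv (τ / τ̄)` and `logDeriv (τ * τ̄)`.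
-/

open scoped Topology

section HirotaDerivative

variable {𝕜 : Type*} [NontriviallyNormedField 𝕜] {f g : 𝕜 → 𝕜} {x : 𝕜}

theorem deriv_eq_logDeriv_mul (hfx : f x ≠ 0) : deriv f x = logDeriv f x * f x :=
  (div_mul_cancel₀ _ hfx).symm

theorem contDiffAt_logDeriv {m n : WithTop ℕ∞} (hf : ContDiffAt 𝕜 n f x) (hmn : m + 1 ≤ n)
    (hfx : f x ≠ 0) : ContDiffAt 𝕜 m (logDeriv f) x :=
  (hf.derivWithin hmn).div (hf.of_le (le_self_add.trans hmn)) hfx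

theorem differentiableAt_logDeriv (hf : ContDiffAt 𝕜 2 f x) (hfx : f x ≠ 0) :
    DifferentiableAt 𝕜 (logDeriv f) x :=
  (contDiffAt_logDeriv (m := 1) hf (by norm_num) hfx).differentiableAt one_ne_zero

theorem differentiableAt_deriv_logDeriv (hf : ContDiffAt 𝕜 3 f x) (hfx : f x ≠ 0) :
    DifferentiableAt 𝕜 (deriv (logDeriv f)) x :=
  ((contDiffAt_logDeriv (m := 2) hf (by norm_num) hfx).derivWithin (m := 1)
    (by norm_num)).differentiableAt one_ne_zero

theorem deriv_deriv_eq_logDeriv_mul (hf : ContDiffAt 𝕜 2 f x) (hfx : f x ≠ 0) :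
    deriv (deriv f) x = (deriv (logDeriv f) x + logDeriv f x ^ 2) * f x := by
  have hderiv : deriv f =ᶠ[𝓝 x] logDeriv f * f := by
    filter_upwards [hf.continuousAt.eventually_ne hfx] with y hfy using deriv_eq_logDeriv_mul hfy
  rw [hderiv.deriv_eq,
    deriv_mul (differentiableAt_logDeriv hf hfx) (hf.differentiableAt two_ne_zero),
    deriv_eq_logDeriv_mul hfx]
  ring

theorem deriv_deriv_deriv_eq_logDeriv_mul (hf : ContDiffAt 𝕜 3 f x) (hfx : f x ≠ 0) :
    deriv (deriv (deriv f)) x =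
      (deriv (deriv (logDeriv f)) x + 3 * logDeriv f x * deriv (logDeriv f) x
        + logDeriv f x ^ 3) * f x := by
  have hf2 : ContDiffAt 𝕜 2 f x := hf.of_le (by norm_num)
  have hderiv : deriv (deriv f) =ᶠ[𝓝 x] (deriv (logDeriv f) + logDeriv f ^ 2) * f := by
    filter_upwards [hf2.eventually (by simp), hf.continuousAt.eventually_ne hfx] with y hy hfy
      using deriv_deriv_eq_logDeriv_mul hy hfy
  have hu := differentiableAt_logDeriv hf2 hfx
  have hu' := differentiableAt_deriv_logDeriv hf hfx
  rw [hderiv.deriv_eq, deriv_mul (hu'.add (hu.pow 2)) (hf.differentiableAt three_ne_zero),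
    deriv_add hu' (hu.pow 2), deriv_pow hu, deriv_eq_logDeriv_mul hfx]
  simp only [Pi.add_apply, Pi.pow_apply]
  push_cast
  ring

theorem logDeriv_mul_eventuallyEq (hf : ContDiffAt 𝕜 1 f x) (hg : ContDiffAt 𝕜 1 g x)
    (hfx : f x ≠ 0) (hgx : g x ≠ 0) :
    logDeriv (f * g) =ᶠ[𝓝 x] logDeriv f + logDeriv g := by
  filter_upwards [hf.eventually (by simp), hg.eventually (by simp),
    hf.continuousAt.eventually_ne hfx, hg.continuousAt.eventually_ne hgx] with y hfd hgd hfy hgy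
  exact logDeriv_mul y hfy hgy (hfd.differentiableAt one_ne_zero) (hgd.differentiableAt one_ne_zero)

theorem logDeriv_div_eventuallyEq (hf : ContDiffAt 𝕜 1 f x) (hg : ContDiffAt 𝕜 1 g x)
    (hfx : f x ≠ 0) (hgx : g x ≠ 0) :
    logDeriv (f / g) =ᶠ[𝓝 x] logDeriv f - logDeriv g := by
  filter_upwards [hf.eventually (by simp), hg.eventually (by simp),
    hf.continuousAt.eventually_ne hfx, hg.continuousAt.eventually_ne hgx] with y hfd hgd hfy hgy
  exact logDeriv_div y hfy hgy (hfd.differentiableAt one_ne_zero) (hgd.differentiableAt one_ne_zero)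

theorem deriv_logDeriv_mul (hf : ContDiffAt 𝕜 2 f x) (hg : ContDiffAt 𝕜 2 g x)
    (hfx : f x ≠ 0) (hgx : g x ≠ 0) :
    deriv (logDeriv (f * g)) x = deriv (logDeriv f) x + deriv (logDeriv g) x := by
  rw [(logDeriv_mul_eventuallyEq (hf.of_le one_le_two) (hg.of_le one_le_two) hfx hgx).deriv_eq,
    deriv_add (differentiableAt_logDeriv hf hfx) (differentiableAt_logDeriv hg hgx)]

theorem deriv_deriv_logDeriv_div (hf : ContDiffAt 𝕜 3 f x) (hg : ContDiffAt 𝕜 3 g x)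
    (hfx : f x ≠ 0) (hgx : g x ≠ 0) :
    deriv (deriv (logDeriv (f / g))) x =
      deriv (deriv (logDeriv f)) x - deriv (deriv (logDeriv g)) x := by
  have hdiv := logDeriv_div_eventuallyEq (hf.of_le (by norm_num)) (hg.of_le (by norm_num)) hfx hgx
  rw [hdiv.deriv.deriv_eq]
  simpa only [iteratedDeriv_succ, iteratedDeriv_zero] using
    iteratedDeriv_sub (n := 2) (contDiffAt_logDeriv hf (by norm_num) hfx)
      (contDiffAt_logDeriv hg (by norm_num) hgx)

/-- Hirota's bilinear derivative `D ^ n f·g` in one variable, that is `(∂_x - ∂_y) ^ n (f(x) g(y))`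
at `y = x`, given by its binomial expansion. -/
noncomputable def hirotaD (n : ℕ) (f g : 𝕜 → 𝕜) (x : 𝕜) : 𝕜 :=
  ∑ k ∈ Finset.range (n + 1),
    (-1) ^ k * (n.choose k : 𝕜) * iteratedDeriv (n - k) f x * iteratedDeriv k g x

theorem hirotaD_one (f g : 𝕜 → 𝕜) (x : 𝕜) :
    hirotaD 1 f g x = deriv f x * g x - f x * deriv g x := by
  simp only [hirotaD, Finset.sum_range_succ, Finset.sum_range_zero, Nat.reduceSub, Nat.choose,
    iteratedDeriv_succ, iteratedDeriv_zero]
  push_cast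
  ring

theorem hirotaD_two (f g : 𝕜 → 𝕜) (x : 𝕜) :
    hirotaD 2 f g x =
      deriv (deriv f) x * g x - 2 * deriv f x * deriv g x + f x * deriv (deriv g) x := by
  simp only [hirotaD, Finset.sum_range_succ, Finset.sum_range_zero, Nat.reduceSub, Nat.choose,
    iteratedDeriv_succ, iteratedDeriv_zero]
  push_cast
  ring

theorem hirotaD_three (f g : 𝕜 → 𝕜) (x : 𝕜) :
    hirotaD 3 f g x =
      deriv (deriv (deriv f)) x * g x - 3 * deriv (deriv f) x * deriv g x
        + 3 * deriv f x * deriv (deriv g) x - f x * deriv (deriv (deriv g)) x := by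
  simp only [hirotaD, Finset.sum_range_succ, Finset.sum_range_zero, Nat.reduceSub, Nat.choose,
    iteratedDeriv_succ, iteratedDeriv_zero]
  push_cast
  ring

theorem hirotaD_one_eq_logDeriv_mul (hf : DifferentiableAt 𝕜 f x) (hg : DifferentiableAt 𝕜 g x)
    (hfx : f x ≠ 0) (hgx : g x ≠ 0) :
    hirotaD 1 f g x = logDeriv (f / g) x * (f x * g x) := by
  have hdiv : logDeriv (f / g) x = logDeriv f x - logDeriv g x := logDeriv_div x hfx hgx hf hg
  rw [hirotaD_one, hdiv, deriv_eq_logDeriv_mul hfx, deriv_eq_logDeriv_mul hgx]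
  ring

theorem hirotaD_two_eq_logDeriv_mul (hf : ContDiffAt 𝕜 2 f x) (hg : ContDiffAt 𝕜 2 g x)
    (hfx : f x ≠ 0) (hgx : g x ≠ 0) :
    hirotaD 2 f g x =
      (deriv (logDeriv (f * g)) x + logDeriv (f / g) x ^ 2) * (f x * g x) := by
  have hdiv : logDeriv (f / g) x = logDeriv f x - logDeriv g x :=
    logDeriv_div x hfx hgx (hf.differentiableAt two_ne_zero) (hg.differentiableAt two_ne_zero)
  rw [hirotaD_two, hdiv, deriv_logDeriv_mul hf hg hfx hgx, deriv_deriv_eq_logDeriv_mul hf hfx,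
    deriv_deriv_eq_logDeriv_mul hg hgx, deriv_eq_logDeriv_mul hfx, deriv_eq_logDeriv_mul hgx]
  ring

theorem hirotaD_three_eq_logDeriv_mul (hf : ContDiffAt 𝕜 3 f x) (hg : ContDiffAt 𝕜 3 g x)
    (hfx : f x ≠ 0) (hgx : g x ≠ 0) :
    hirotaD 3 f g x =
      (deriv (deriv (logDeriv (f / g))) x
        + 3 * logDeriv (f / g) x * deriv (logDeriv (f * g)) x
        + logDeriv (f / g) x ^ 3) * (f x * g x) := by
  have hf2 : ContDiffAt 𝕜 2 f x := hf.of_le (by norm_num)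
  have hg2 : ContDiffAt 𝕜 2 g x := hg.of_le (by norm_num)
  have hdiv : logDeriv (f / g) x = logDeriv f x - logDeriv g x :=
    logDeriv_div x hfx hgx (hf.differentiableAt three_ne_zero) (hg.differentiableAt three_ne_zero)
  rw [hirotaD_three, hdiv, deriv_deriv_logDeriv_div hf hg hfx hgx,
    deriv_logDeriv_mul hf2 hg2 hfx hgx, deriv_deriv_deriv_eq_logDeriv_mul hf hfx,
    deriv_deriv_deriv_eq_logDeriv_mul hg hgx, deriv_deriv_eq_logDeriv_mul hf2 hfx,
    deriv_deriv_eq_logDeriv_mul hg2 hgx, deriv_eq_logDeriv_mul hfx, deriv_eq_logDeriv_mul hgx]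
  ring

theorem hirotaD_three_sub_hirotaD_one_of_hirotaD_two_eq {c : 𝕜} (hf : ContDiffAt 𝕜 3 f x)
    (hg : ContDiffAt 𝕜 3 g x) (hfx : f x ≠ 0) (hgx : g x ≠ 0)
    (hD2 : hirotaD 2 f g x = c * (f x * g x)) :
    hirotaD 3 f g x - 3 * c * hirotaD 1 f g x =
      (deriv (deriv (logDeriv (f / g))) x - 2 * logDeriv (f / g) x ^ 3) * (f x * g x) := by
  rw [hirotaD_two_eq_logDeriv_mul (hf.of_le (by norm_num)) (hg.of_le (by norm_num)) hfx hgx] at hD2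
  rw [hirotaD_three_eq_logDeriv_mul hf hg hfx hgx, hirotaD_one_eq_logDeriv_mul
    (hf.differentiableAt three_ne_zero) (hg.differentiableAt three_ne_zero) hfx hgx]
  linear_combination 3 * logDeriv (f / g) x * hD2

end HirotaDerivative

theorem deriv_log_eventuallyEq_logDeriv {f : ℝ → ℝ} {x : ℝ} (hf : ContDiffAt ℝ 1 f x)
    (hfx : f x ≠ 0) : deriv (Real.log ∘ f) =ᶠ[𝓝 x] logDeriv f := by
  filter_upwards [hf.eventually (by simp), hf.continuousAt.eventually_ne hfx] with y hfd hfy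
    using Real.deriv_log_comp_eq_logDeriv (hfd.differentiableAt one_ne_zero) hfy

theorem stmt_6_general {c : ℝ} {τ τb θ : ℝ → ℝ → ℝ} {x t : ℝ}
    (hτx : ContDiffAt ℝ 3 (τ · t) x) (hτbx : ContDiffAt ℝ 3 (τb · t) x)
    (hτt : DifferentiableAt ℝ (τ x) t) (hτbt : DifferentiableAt ℝ (τb x) t)
    (hτpos : 0 < τ x t) (hτbpos : 0 < τb x t)
    (hbil1 : hirotaD 2 (τ · t) (τb · t) x - c * (τ x t * τb x t) = 0)
    (hbil2 : hirotaD 3 (τ · t) (τb · t) x - hirotaD 1 (τ x) (τb x) t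
      - 3 * c * hirotaD 1 (τ · t) (τb · t) x = 0)
    (hθ : ∀ x t, θ x t = 2 * Real.log (τ x t / τb x t)) :
    deriv (θ x) t = deriv (deriv (deriv (θ · t))) x - (1 / 2) * deriv (θ · t) x ^ 3 := by
  have hτ0 := hτpos.ne'
  have hτb0 := hτbpos.ne'
  have hquot : τ x t / τb x t ≠ 0 := div_ne_zero hτ0 hτb0
  set w : ℝ → ℝ := logDeriv ((τ · t) / (τb · t))
  have hθ_t : deriv (θ x) t = 2 * logDeriv (τ x / τb x) t := by
    rw [funext (hθ x), deriv_const_mul_field]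
    exact congrArg (2 * ·) (Real.deriv_log_comp_eq_logDeriv (hτt.div hτbt hτb0) hquot)
  have hθ_x : deriv (θ · t) =ᶠ[𝓝 x] fun y => 2 * w y := by
    rw [funext (hθ · t)]
    filter_upwards [deriv_log_eventuallyEq_logDeriv
      ((hτx.div hτbx hτb0).of_le (by norm_num)) hquot] with y hy
    rw [deriv_const_mul_field]
    exact congrArg (2 * ·) hy
  have hθ_xxx : deriv (deriv (deriv (θ · t))) x = 2 * deriv (deriv w) x := by
    rw [hθ_x.deriv.deriv_eq, deriv_const_mul_field', deriv_const_mul_field]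
  have hw_t : logDeriv (τ x / τb x) t = deriv (deriv w) x - 2 * w x ^ 3 := by
    have hD3 := hirotaD_three_sub_hirotaD_one_of_hirotaD_two_eq hτx hτbx hτ0 hτb0
      (sub_eq_zero.1 hbil1)
    rw [hirotaD_one_eq_logDeriv_mul hτt hτbt hτ0 hτb0] at hbil2
    refine mul_right_cancel₀ (mul_ne_zero hτ0 hτb0) ?_
    linear_combination hD3 - hbil2
  rw [hθ_t, hθ_xxx, hθ_x.eq_of_nhds, hw_t]
  ring

/-- For `c ∈ ℝ` and smooth positive `τ(x,t)`, `τ̄(x,t)` satisfying the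
bilinear equations `(D_x² - c) τ·τ̄ = 0` and `(D_x³ - D_t - 3c D_x) τ·τ̄ = 0`,
the function `θ = 2 log(τ/τ̄)` satisfies the potential defocusing mKdV equation
`θ_t = θ_{xxx} - (1/2)θ_x³`. -/
theorem stmt_6 (c : ℝ) (τ τb : ℝ → ℝ → ℝ) (θ : ℝ → ℝ → ℝ)
    (hτ : ContDiff ℝ (⊤ : ℕ∞) (fun p : ℝ × ℝ => τ p.1 p.2))
    (hτb : ContDiff ℝ (⊤ : ℕ∞) (fun p : ℝ × ℝ => τb p.1 p.2))
    (hτpos : ∀ x t, 0 < τ x t) (hτbpos : ∀ x t, 0 < τb x t)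
    (hbil1 : ∀ x t,
      deriv (fun x' => deriv (fun x'' => τ x'' t) x') x * τb x t
        - 2 * deriv (fun x' => τ x' t) x * deriv (fun x' => τb x' t) x
        + τ x t * deriv (fun x' => deriv (fun x'' => τb x'' t) x') x
        - c * (τ x t * τb x t) = 0)
    (hbil2 : ∀ x t,
      deriv (fun x' => deriv (fun x'' => deriv (fun s => τ s t) x'') x') x * τb x t
        - 3 * deriv (fun x' => deriv (fun x'' => τ x'' t) x') x * deriv (fun x' => τb x' t) x
        + 3 * deriv (fun x' => τ x' t) x * deriv (fun x' => deriv (fun x'' => τb x'' t) x') x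
        - τ x t * deriv (fun x' => deriv (fun x'' => deriv (fun s => τb s t) x'') x') x
        - (deriv (fun t' => τ x t') t * τb x t - τ x t * deriv (fun t' => τb x t') t)
        - 3 * c * (deriv (fun x' => τ x' t) x * τb x t - τ x t * deriv (fun x' => τb x' t) x)
      = 0)
    (hθ : ∀ x t, θ x t = 2 * Real.log (τ x t / τb x t)) :
    ∀ x t, deriv (fun t' => θ x t') t =
      deriv (fun x' => deriv (fun x'' => deriv (fun s => θ s t) x'') x') x
        - (1 / 2) * (deriv (fun x' => θ x' t) x) ^ 3 := by
  intro x t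
  have hτ3 : ContDiff ℝ 3 fun p : ℝ × ℝ => τ p.1 p.2 := contDiff_infty.1 hτ 3
  have hτb3 : ContDiff ℝ 3 fun p : ℝ × ℝ => τb p.1 p.2 := contDiff_infty.1 hτb 3
  refine stmt_6_general (c := c)
    (hτ3.comp (contDiff_prodMk_left t)).contDiffAt (hτb3.comp (contDiff_prodMk_left t)).contDiffAt
    ((hτ3.comp (contDiff_prodMk_right x)).differentiable three_ne_zero t)
    ((hτb3.comp (contDiff_prodMk_right x)).differentiable three_ne_zero t)
    (hτpos x t) (hτbpos x t) ?_ ?_ hθ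
  · rw [hirotaD_two]; exact hbil1 x t
  · rw [hirotaD_three, hirotaD_one, hirotaD_one]; exact hbil2 x t
end

section
/- Let f_n^{(i)} (i = 1,…,N, n ∈ ℤ) be smooth real-valued functions of (x,t,y,z) satisfying ∂_x f_n^{(i)} = f_{n+1}^{(i)}, ∂_z f_n^{(i)} = f_{n+2}^{(i)}, ∂_t f_n^{(i)} = −4 f_{n+3}^{(i)}, and ∂_y f_n^{(i)} = f_{n−1}^{(i)} for all i and n. For an integer k, set σ(k) = e^{−xy} ρ_N(k). Then (D_x² − D_z) σ(k+1)·σ(k) = 0. -/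
/-!
Write `[a₁, …, a_N]` for the minor of the `N × ℤ` matrix `(f_n^{(i)})` with columns `a₁, …, a_N`.
Since `∂_x` raises a column index by one and `∂_z` by two, and a minor with a repeated column
vanishes, `ρ = [k, …, k+N-1]` satisfies

* `ρ_x = [k, …, k+N-2, k+N]`,
* `ρ_xx = L + S` and `ρ_z = L - S`, where `L = [k, …, k+N-2, k+N+1]` and
  `S = [k, …, k+N-3, k+N-1, k+N]`.

Hence `(D_x² - D_z) ρ(k+1)·ρ(k) = 2 (S(k+1) ρ(k) - ρ_x(k+1) ρ_x(k) + ρ(k+1) L(k))`, which is zero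
by a three-term Plücker relation. The factor `e^{-xy}` is harmless because
`D_x² (e u)·(e v) = e² D_x² u·v + (D_x² e·e) u v` and `D_x² e·e = 0` for exponentials in `x`.
-/

open Finset Function Matrix

section HirotaDerivative

variable {𝕜 : Type*} [NontriviallyNormedField 𝕜]

/-- Hirota's bilinear derivative `D_x^n u·v` in one variable, as the binomial expansion of
`(∂/∂x - ∂/∂y)^n u(x) v(y)` at `y = x`. -/
noncomputable def hirotaDeriv (n : ℕ) (u v : 𝕜 → 𝕜) (x : 𝕜) : 𝕜 :=
  ∑ j ∈ range (n + 1), (-1) ^ j * n.choose j * iteratedDeriv (n - j) u x * iteratedDeriv j v x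

theorem hirotaDeriv_one (u v : 𝕜 → 𝕜) (x : 𝕜) :
    hirotaDeriv 1 u v x = deriv u x * v x - u x * deriv v x := by
  simp [hirotaDeriv, sum_range_succ, iteratedDeriv_one, sub_eq_add_neg]

theorem hirotaDeriv_two (u v : 𝕜 → 𝕜) (x : 𝕜) :
    hirotaDeriv 2 u v x =
      deriv (deriv u) x * v x - 2 * deriv u x * deriv v x + u x * deriv (deriv v) x := by
  simp [hirotaDeriv, sum_range_succ, iteratedDeriv_succ, sub_eq_add_neg]

theorem hirotaDeriv_one_const_mul (c : 𝕜) (u v : 𝕜 → 𝕜) (x : 𝕜) :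
    hirotaDeriv 1 (fun s => c * u s) (fun s => c * v s) x = c ^ 2 * hirotaDeriv 1 u v x := by
  simp only [hirotaDeriv_one, deriv_const_mul_field]
  ring

theorem deriv_deriv_fun_mul {u v : 𝕜 → 𝕜} {x : 𝕜} (hu : Differentiable 𝕜 u)
    (hu' : DifferentiableAt 𝕜 (deriv u) x) (hv : Differentiable 𝕜 v)
    (hv' : DifferentiableAt 𝕜 (deriv v) x) :
    deriv (deriv fun s => u s * v s) x =
      deriv (deriv u) x * v x + 2 * deriv u x * deriv v x + u x * deriv (deriv v) x := by
  have deriv_mul_eq : (deriv fun s => u s * v s) = fun s => deriv u s * v s + u s * deriv v s :=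
    funext fun s => deriv_fun_mul (hu s) (hv s)
  rw [deriv_mul_eq, deriv_fun_add (hu'.fun_mul (hv x)) ((hu x).fun_mul hv'),
    deriv_fun_mul hu' (hv x), deriv_fun_mul (hu x) hv']
  ring

theorem hirotaDeriv_two_mul_mul {e u v : 𝕜 → 𝕜} {x : 𝕜}
    (he : Differentiable 𝕜 e) (he' : DifferentiableAt 𝕜 (deriv e) x)
    (hu : Differentiable 𝕜 u) (hu' : DifferentiableAt 𝕜 (deriv u) x)
    (hv : Differentiable 𝕜 v) (hv' : DifferentiableAt 𝕜 (deriv v) x) :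
    hirotaDeriv 2 (fun s => e s * u s) (fun s => e s * v s) x =
      e x ^ 2 * hirotaDeriv 2 u v x + hirotaDeriv 2 e e x * (u x * v x) := by
  simp only [hirotaDeriv_two, deriv_deriv_fun_mul he he' hu hu', deriv_deriv_fun_mul he he' hv hv',
    deriv_fun_mul (he x) (hu x), deriv_fun_mul (he x) (hv x)]
  ring

theorem hirotaDeriv_two_mul_mul_of_hasDerivAt_const_mul {e u v : 𝕜 → 𝕜} {c x : 𝕜}
    (he : ∀ s, HasDerivAt e (c * e s) s)
    (hu : Differentiable 𝕜 u) (hu' : DifferentiableAt 𝕜 (deriv u) x)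
    (hv : Differentiable 𝕜 v) (hv' : DifferentiableAt 𝕜 (deriv v) x) :
    hirotaDeriv 2 (fun s => e s * u s) (fun s => e s * v s) x = e x ^ 2 * hirotaDeriv 2 u v x := by
  have diff_e : Differentiable 𝕜 e := fun s => (he s).differentiableAt
  have deriv_e : deriv e = fun s => c * e s := funext fun s => (he s).deriv
  have hirota_e : hirotaDeriv 2 e e x = 0 := by
    simp only [hirotaDeriv_two, deriv_e, deriv_const_mul_field]
    ring
  rw [hirotaDeriv_two_mul_mul diff_e (deriv_e ▸ diff_e.const_mul c x) hu hu' hv hv', hirota_e,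
    zero_mul, add_zero]

end HirotaDerivative

section MaximalMinor

variable {m ι R : Type*} [Fintype m] [DecidableEq m] [CommRing R]

/-- The minor of `M` formed by all its rows and by the columns `a j`, in that order and possibly
with repetitions. -/
def maximalMinor (M : Matrix m ι R) (a : m → ι) : R :=
  (M.submatrix id a).det

theorem maximalMinor_update (M : Matrix m ι R) (a : m → ι) (j : m) (c : ι) :
    maximalMinor M (update a j c) = ((M.submatrix id a).updateCol j fun i => M i c).det := by
  unfold maximalMinor
  congr 1
  ext i l
  by_cases hl : l = j <;> simp [hl]

theorem maximalMinor_update_eq_zero (M : Matrix m ι R) {a : m → ι} {j l : m} {c : ι}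
    (hlj : l ≠ j) (hl : a l = c) : maximalMinor M (update a j c) = 0 :=
  det_zero_of_column_eq hlj fun i => by simp [hlj, hl]

theorem maximalMinor_comp_swap (M : Matrix m ι R) (a : m → ι) {j l : m} (hjl : j ≠ l) :
    maximalMinor M (a ∘ Equiv.swap j l) = -maximalMinor M a := by
  simpa [maximalMinor, Equiv.Perm.sign_swap hjl] using
    det_permute' (Equiv.swap j l) (M.submatrix id a)

-- By Cramer, `det A • w` is a combination of the columns of `A`; substitute it in `B`.
theorem det_mul_det_updateCol_eq_sum (A B : Matrix m m R) (l : m) (w : m → R) :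
    A.det * (B.updateCol l w).det =
      ∑ j, (A.updateCol j w).det * (B.updateCol l fun i => A i j).det := by
  simp only [← cramer_apply]
  have cramer_rule : A.det • w = ∑ j, A.cramer w j • fun i => A i j := by
    rw [← mulVec_cramer]
    ext i
    simp [mulVec, dotProduct, mul_comm]
  simpa using congrFun (congrArg B.cramer cramer_rule) l

theorem maximalMinor_mul_maximalMinor_update (M : Matrix m ι R) (a b : m → ι) (l : m) (c : ι) :
    maximalMinor M a * maximalMinor M (update b l c) =
      ∑ j, maximalMinor M (update a j c) * maximalMinor M (update b l (a j)) := by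
  simp only [maximalMinor_update]
  exact det_mul_det_updateCol_eq_sum _ _ l fun i => M i c

end MaximalMinor

section DerivMaximalMinor

variable {m ι 𝕜 : Type*} [Fintype m] [DecidableEq m] [NontriviallyNormedField 𝕜]

theorem hasDerivAt_matrix_det {A : 𝕜 → Matrix m m 𝕜} {A' : Matrix m m 𝕜} {s : 𝕜}
    (hA : ∀ i j, HasDerivAt (fun r => A r i j) (A' i j) s) :
    HasDerivAt (fun r => (A r).det) (∑ j, ((A s).updateCol j fun i => A' i j).det) s := by
  simp only [det_apply]
  rw [sum_comm]
  refine HasDerivAt.fun_sum fun τ _ => ?_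
  rw [← smul_sum]
  refine (HasDerivAt.fun_finsetProd fun j _ => hA (τ j) j).const_smul _ |>.congr_deriv ?_
  congr 1
  refine sum_congr rfl fun j _ => ?_
  rw [← prod_erase_mul _ _ (mem_univ j), updateCol_self, smul_eq_mul]
  congr 1
  exact prod_congr rfl fun l hl => (updateCol_ne (ne_of_mem_erase hl)).symm

theorem hasDerivAt_maximalMinor {M : 𝕜 → Matrix m ι 𝕜} {shift : ι → ι} {s : 𝕜}
    (hM : ∀ i c, HasDerivAt (fun r => M r i c) (M s i (shift c)) s) (a : m → ι) :
    HasDerivAt (fun r => maximalMinor (M r) a)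
      (∑ j, maximalMinor (M s) (update a j (shift (a j)))) s := by
  simp only [maximalMinor_update]
  exact hasDerivAt_matrix_det (A' := (M s).submatrix id (shift ∘ a)) fun i j => hM i (a j)

end DerivMaximalMinor

/-- The `n` consecutive column indices `k, …, k + n - 1`. -/
def window (n : ℕ) (k : ℤ) : Fin n → ℤ :=
  fun j => k + j

/-- The column indices `k, …, k + n - 1, k + n + d`: a window of length `n + 1` with its last index
raised by `d`. -/
def raisedWindow (n : ℕ) (k d : ℤ) : Fin (n + 1) → ℤ :=
  update (window (n + 1) k) (Fin.last n) (k + n + d)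

theorem window_castSucc {n : ℕ} (k : ℤ) (j : Fin n) : window (n + 1) k j.castSucc = k + j :=
  rfl

theorem window_succ {n : ℕ} (k : ℤ) (j : Fin n) : window (n + 1) k j.succ = k + j + 1 := by
  simp [window, add_assoc]

theorem window_last (n : ℕ) (k : ℤ) : window (n + 1) k (Fin.last n) = k + n :=
  rfl

section WindowMinor

variable {R : Type*} [CommRing R] {n : ℕ} (M : Matrix (Fin (n + 1)) ℤ R) (k : ℤ)

/-- The minor with columns `k, …, k + n - 2, k + n + 1, k + n`, to be read as `0` when `n = 0`;
this is `-S` for a window of length `N = n + 1`. It is written as a sum over the first `n`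
positions, in which every term but the last has a repeated column, so that windows of length one
need no separate treatment. -/
def penultimateRaisedMinor : R :=
  ∑ j : Fin n, maximalMinor M (update (window (n + 1) k) j.castSucc (k + j + 2))

theorem maximalMinor_window_raise_one_eq_zero (j : Fin n) :
    maximalMinor M (update (window (n + 1) k) j.castSucc (k + j + 1)) = 0 :=
  maximalMinor_update_eq_zero M (by simp [Fin.ext_iff]) (window_succ k j)

theorem maximalMinor_window_raise_two_eq_zero {j : Fin n} (hj : (j : ℕ) + 1 < n) :
    maximalMinor M (update (window (n + 1) k) j.castSucc (k + j + 2)) = 0 :=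
  maximalMinor_update_eq_zero M (l := ⟨j + 2, by omega⟩) (by simp [Fin.ext_iff])
    (by simp [window, add_assoc])

theorem sum_maximalMinor_window_raise_one :
    ∑ j, maximalMinor M (update (window (n + 1) k) j (window (n + 1) k j + 1)) =
      maximalMinor M (raisedWindow n k 1) := by
  simp only [Fin.sum_univ_castSucc, window_castSucc, window_last,
    maximalMinor_window_raise_one_eq_zero, sum_const_zero, zero_add, raisedWindow]

theorem sum_maximalMinor_window_raise_two :
    ∑ j, maximalMinor M (update (window (n + 1) k) j (window (n + 1) k j + 2)) =
      penultimateRaisedMinor M k + maximalMinor M (raisedWindow n k 2) :=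
  Fin.sum_univ_castSucc _

theorem maximalMinor_raisedWindow_raise_one (j : Fin n) :
    maximalMinor M (update (raisedWindow n k 1) j.castSucc (k + j + 1)) =
      -maximalMinor M (update (window (n + 1) k) j.castSucc (k + j + 2)) := by
  obtain hj | hj : (j : ℕ) + 1 < n ∨ (j : ℕ) + 1 = n := by omega
  · have succ_ne_last : j.succ ≠ Fin.last n := by simp [Fin.ext_iff, hj.ne]
    rw [maximalMinor_window_raise_two_eq_zero M k hj, neg_zero]
    exact maximalMinor_update_eq_zero M (l := j.succ) (by simp [Fin.ext_iff])
      (by simp [raisedWindow, succ_ne_last, window_succ])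
  · have castSucc_ne_last : j.castSucc ≠ Fin.last n := (Fin.castSucc_lt_last j).ne
    have castSucc_column : k + (j : ℤ) + 1 = k + n := by omega
    have last_column : k + (n : ℤ) + 1 = k + j + 2 := by omega
    rw [← maximalMinor_comp_swap M _ castSucc_ne_last]
    congr 1
    ext l
    by_cases h_castSucc : l = j.castSucc
    · simp [h_castSucc, castSucc_ne_last.symm, window_last, castSucc_column]
    by_cases h_last : l = Fin.last n
    · simp [h_last, castSucc_ne_last.symm, raisedWindow, last_column]
    simp [h_castSucc, h_last, raisedWindow, Equiv.swap_apply_of_ne_of_ne h_castSucc h_last]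

theorem sum_maximalMinor_raisedWindow_raise_one :
    ∑ j, maximalMinor M (update (raisedWindow n k 1) j (raisedWindow n k 1 j + 1)) =
      maximalMinor M (raisedWindow n k 2) - penultimateRaisedMinor M k := by
  have raisedWindow_castSucc (j : Fin n) : raisedWindow n k 1 j.castSucc = k + j := by
    simp [raisedWindow, window_castSucc, (Fin.castSucc_lt_last j).ne]
  have raise_last : update (raisedWindow n k 1) (Fin.last n) (raisedWindow n k 1 (Fin.last n) + 1) =
      raisedWindow n k 2 := by
    simp [raisedWindow, add_assoc]
  simp only [Fin.sum_univ_castSucc, raisedWindow_castSucc, raise_last,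
    maximalMinor_raisedWindow_raise_one, sum_neg_distrib, penultimateRaisedMinor]
  ring

theorem maximalMinor_window_exchange_term (j : Fin n) :
    maximalMinor M (update (window (n + 1) (k + 1)) j.castSucc (k + n + 2)) *
        maximalMinor M (update (window (n + 1) k) (Fin.last n) (k + 1 + j)) =
      maximalMinor M (update (window (n + 1) (k + 1)) j.castSucc (k + 1 + j + 2)) *
        maximalMinor M (window (n + 1) k) := by
  obtain hj | hj : (j : ℕ) + 1 < n ∨ (j : ℕ) + 1 = n := by omega
  · have repeated_column :
        maximalMinor M (update (window (n + 1) k) (Fin.last n) (k + 1 + j)) = 0 :=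
      maximalMinor_update_eq_zero M (by simp [Fin.ext_iff, hj.ne])
        ((window_succ k j).trans (add_right_comm ..))
    rw [repeated_column, maximalMinor_window_raise_two_eq_zero M (k + 1) hj, mul_zero, zero_mul]
  · have last_column : k + 1 + (j : ℤ) = k + n := by omega
    have update_last : update (window (n + 1) k) (Fin.last n) (k + n) = window (n + 1) k :=
      update_eq_self _ _
    rw [last_column, update_last]

theorem maximalMinor_window_plucker :
    maximalMinor M (window (n + 1) (k + 1)) * maximalMinor M (raisedWindow n k 2) =
      penultimateRaisedMinor M (k + 1) * maximalMinor M (window (n + 1) k) +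
        maximalMinor M (raisedWindow n (k + 1) 1) * maximalMinor M (raisedWindow n k 1) := by
  have raise_last : update (window (n + 1) (k + 1)) (Fin.last n) (k + n + 2) =
      raisedWindow n (k + 1) 1 := by
    unfold raisedWindow
    congr 1
    ring
  calc maximalMinor M (window (n + 1) (k + 1)) * maximalMinor M (raisedWindow n k 2)
    _ = ∑ j, maximalMinor M (update (window (n + 1) (k + 1)) j (k + n + 2)) *
          maximalMinor M (update (window (n + 1) k) (Fin.last n) (window (n + 1) (k + 1) j)) :=
      maximalMinor_mul_maximalMinor_update ..
    _ = _ := by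
      simp only [Fin.sum_univ_castSucc, window_castSucc, window_last, raise_last,
        maximalMinor_window_exchange_term, penultimateRaisedMinor, sum_mul,
        add_right_comm k 1 (n : ℤ), raisedWindow]

end WindowMinor

section DerivWindowMinor

variable {𝕜 : Type*} [NontriviallyNormedField 𝕜] {n : ℕ} {M : 𝕜 → Matrix (Fin (n + 1)) ℤ 𝕜} {s : 𝕜}

theorem hasDerivAt_maximalMinor_window
    (hM : ∀ i c, HasDerivAt (fun r => M r i c) (M s i (c + 1)) s) (k : ℤ) :
    HasDerivAt (fun r => maximalMinor (M r) (window (n + 1) k))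
      (maximalMinor (M s) (raisedWindow n k 1)) s := by
  rw [← sum_maximalMinor_window_raise_one]
  exact hasDerivAt_maximalMinor hM _

theorem hasDerivAt_maximalMinor_raisedWindow
    (hM : ∀ i c, HasDerivAt (fun r => M r i c) (M s i (c + 1)) s) (k : ℤ) :
    HasDerivAt (fun r => maximalMinor (M r) (raisedWindow n k 1))
      (maximalMinor (M s) (raisedWindow n k 2) - penultimateRaisedMinor (M s) k) s := by
  rw [← sum_maximalMinor_raisedWindow_raise_one]
  exact hasDerivAt_maximalMinor hM _

theorem hasDerivAt_maximalMinor_window_of_shift_two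
    (hM : ∀ i c, HasDerivAt (fun r => M r i c) (M s i (c + 2)) s) (k : ℤ) :
    HasDerivAt (fun r => maximalMinor (M r) (window (n + 1) k))
      (penultimateRaisedMinor (M s) k + maximalMinor (M s) (raisedWindow n k 2)) s := by
  rw [← sum_maximalMinor_window_raise_two]
  exact hasDerivAt_maximalMinor hM _

theorem deriv_maximalMinor_window
    (hM : ∀ r i c, HasDerivAt (fun r => M r i c) (M r i (c + 1)) r) (k : ℤ) :
    (deriv fun r => maximalMinor (M r) (window (n + 1) k)) =
      fun r => maximalMinor (M r) (raisedWindow n k 1) :=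
  funext fun r => (hasDerivAt_maximalMinor_window (hM r) k).deriv

end DerivWindowMinor

section Bilinear

variable {𝕜 : Type*} [NontriviallyNormedField 𝕜]

theorem differentiable_maximalMinor_window {N : ℕ} {M : 𝕜 → Matrix (Fin N) ℤ 𝕜}
    (hM : ∀ r i c, HasDerivAt (fun r => M r i c) (M r i (c + 1)) r) (k : ℤ) :
    Differentiable 𝕜 fun r => maximalMinor (M r) (window N k) :=
  fun r => (hasDerivAt_maximalMinor (hM r) _).differentiableAt

theorem differentiable_deriv_maximalMinor_window {N : ℕ} {M : 𝕜 → Matrix (Fin N) ℤ 𝕜}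
    (hM : ∀ r i c, HasDerivAt (fun r => M r i c) (M r i (c + 1)) r) (k : ℤ) :
    Differentiable 𝕜 (deriv fun r => maximalMinor (M r) (window N k)) := by
  obtain _ | n := N
  · simp [maximalMinor]
  · rw [deriv_maximalMinor_window hM]
    exact fun r => (hasDerivAt_maximalMinor_raisedWindow (hM r) k).differentiableAt

theorem hirotaDeriv_maximalMinor_window {N : ℕ} {M : 𝕜 → 𝕜 → Matrix (Fin N) ℤ 𝕜} {x z : 𝕜}
    (hx : ∀ r i c, HasDerivAt (fun r => M r z i c) (M r z i (c + 1)) r)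
    (hz : ∀ i c, HasDerivAt (fun r => M x r i c) (M x z i (c + 2)) z) (k : ℤ) :
    hirotaDeriv 2 (fun r => maximalMinor (M r z) (window N (k + 1)))
        (fun r => maximalMinor (M r z) (window N k)) x =
      hirotaDeriv 1 (fun r => maximalMinor (M x r) (window N (k + 1)))
        (fun r => maximalMinor (M x r) (window N k)) z := by
  obtain _ | n := N
  · simp [hirotaDeriv_one, hirotaDeriv_two, maximalMinor]
  · simp only [hirotaDeriv_one, hirotaDeriv_two, deriv_maximalMinor_window hx,
      (hasDerivAt_maximalMinor_raisedWindow (hx x) _).deriv,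
      (hasDerivAt_maximalMinor_window_of_shift_two hz _).deriv]
    linear_combination 2 * maximalMinor_window_plucker (M x z) k

theorem stmt_10_general {N : ℕ} {f : Fin N → ℤ → 𝕜 → 𝕜 → 𝕜} {e : 𝕜 → 𝕜} {c : 𝕜}
    (hfx : ∀ i n x z, HasDerivAt (fun x' => f i n x' z) (f i (n + 1) x z) x)
    (hfz : ∀ i n x z, HasDerivAt (fun z' => f i n x z') (f i (n + 2) x z) z)
    (he : ∀ x, HasDerivAt e (c * e x) x) {σ : ℤ → 𝕜 → 𝕜 → 𝕜}
    (hσ : ∀ k x z, σ k x z = e x * det (of fun i j : Fin N => f i (k + (j : ℤ)) x z))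
    (k : ℤ) (x z : 𝕜) :
    hirotaDeriv 2 (fun x' => σ (k + 1) x' z) (fun x' => σ k x' z) x -
      hirotaDeriv 1 (fun z' => σ (k + 1) x z') (fun z' => σ k x z') z = 0 := by
  let M (x z : 𝕜) : Matrix (Fin N) ℤ 𝕜 := of fun i n => f i n x z
  have sigma_eq (k : ℤ) (x z : 𝕜) : σ k x z = e x * maximalMinor (M x z) (window N k) := hσ k x z
  have hMx (r : 𝕜) (i : Fin N) (n : ℤ) := hfx i n r z
  have diff := differentiable_maximalMinor_window (M := fun r => M r z) hMx
  have diff_deriv := differentiable_deriv_maximalMinor_window (M := fun r => M r z) hMx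
  simp only [sigma_eq]
  rw [hirotaDeriv_two_mul_mul_of_hasDerivAt_const_mul he (diff _) (diff_deriv _ x) (diff _)
      (diff_deriv _ x), hirotaDeriv_one_const_mul,
    hirotaDeriv_maximalMinor_window (M := M) hMx fun i n => hfz i n x z, sub_self]

end Bilinear

theorem hasDerivAt_exp_neg_mul_const (y x : ℝ) :
    HasDerivAt (fun x' => Real.exp (-(x' * y))) (-y * Real.exp (-(x * y))) x := by
  simpa [mul_comm] using ((hasDerivAt_id x).mul_const y).neg.exp

/-- For smooth functions `f_n^{(i)}(x,t,y,z)` with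
`∂_x f_n = f_{n+1}`, `∂_z f_n = f_{n+2}`, `∂_t f_n = -4 f_{n+3}`, `∂_y f_n = f_{n-1}`,
and `σ(k) = e^{-xy} ρ_N(k)` where `ρ_N(k) = det[f^{(i)}_{k+j-1}]`, the bilinear equation
`(D_x² - D_z) σ(k+1)·σ(k) = 0` holds. -/
theorem stmt_10 (N : ℕ) (hN : 0 < N) (f : Fin N → ℤ → ℝ → ℝ → ℝ → ℝ → ℝ)
    (hsm : ∀ i n, ContDiff ℝ (⊤ : ℕ∞)
      (fun p : ℝ × ℝ × ℝ × ℝ => f i n p.1 p.2.1 p.2.2.1 p.2.2.2))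
    (hfx : ∀ i n x t y z, deriv (fun x' => f i n x' t y z) x = f i (n + 1) x t y z)
    (hfz : ∀ i n x t y z, deriv (fun z' => f i n x t y z') z = f i (n + 2) x t y z)
    (hft : ∀ i n x t y z, deriv (fun t' => f i n x t' y z) t = -4 * f i (n + 3) x t y z)
    (hfy : ∀ i n x t y z, deriv (fun y' => f i n x t y' z) y = f i (n - 1) x t y z)
    (σ : ℤ → ℝ → ℝ → ℝ → ℝ → ℝ)
    (hσ : ∀ k x t y z, σ k x t y z =
      Real.exp (-(x * y)) *
        Matrix.det (Matrix.of fun i j : Fin N => f i (k + (j.val : ℤ)) x t y z)) :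
    ∀ (k : ℤ) (x t y z : ℝ),
      deriv (fun x' => deriv (fun x'' => σ (k + 1) x'' t y z) x') x * σ k x t y z
        - 2 * deriv (fun x' => σ (k + 1) x' t y z) x * deriv (fun x' => σ k x' t y z) x
        + σ (k + 1) x t y z * deriv (fun x' => deriv (fun x'' => σ k x'' t y z) x') x
        - (deriv (fun z' => σ (k + 1) x t y z') z * σ k x t y z
            - σ (k + 1) x t y z * deriv (fun z' => σ k x t y z') z)
      = 0 := by
  intro k x t y z
  have diff (i : Fin N) (n : ℤ) := (hsm i n).differentiable (by simp)
  have hx (i n x z) : HasDerivAt (fun x' => f i n x' t y z) (f i (n + 1) x t y z) x :=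
    hfx i n x t y z ▸ ((diff i n).comp (f := fun x' => (x', t, y, z)) (by fun_prop) x).hasDerivAt
  have hz (i n x z) : HasDerivAt (fun z' => f i n x t y z') (f i (n + 2) x t y z) z :=
    hfz i n x t y z ▸ ((diff i n).comp (f := fun z' => (x, t, y, z')) (by fun_prop) z).hasDerivAt
  simpa only [hirotaDeriv_one, hirotaDeriv_two] using
    stmt_10_general hx hz (hasDerivAt_exp_neg_mul_const y) (fun k x z => hσ k x t y z) k x z
end

section
/- Let f_n^{(i)} (i = 1,…,N, n ∈ ℤ) be smooth real-valued functions of (x,t,y,z) satisfying ∂_x f_n^{(i)} = f_{n+1}^{(i)}, ∂_z f_n^{(i)} = f_{n+2}^{(i)}, ∂_t f_n^{(i)} = −4 f_{n+3}^{(i)}, and ∂_y f_n^{(i)} = f_{n−1}^{(i)} for all i and n. For an integer k, set σ(k) = e^{−xy} ρ_N(k). Then (D_x³ + D_t + 3 D_x D_z) σ(k+1)·σ(k) = 0. -/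
/-!
Treat the determinant `W(c) = det[f^{(i)}_{c_j}]` as a function of its column labels `c`. By the
product rule each partial derivative acts on `W` as an operator "shift one label by `m`, sum over
the columns" with `m = 1, 2, 3`, and the factor `e^{-xy}` only adds the scalar `-y` to the
`x`-operator, which drops out of the bilinear expression. Applied to consecutive labels, almost
all terms of a shift sum repeat a label and vanish, so every derivative is an integer combination
of a few `W`'s in which at most the three largest labels have moved (for Schur functions these are
the Pieri and Murnaghan–Nakayama rules). The expression is then six times the difference of two
Plücker relations.
-/

open Function Equiv

section Determinants

variable {R ι : Type*} [CommRing R] [Fintype ι] [DecidableEq ι]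

-- Expand column `i` of `A` in the columns of `B` by Cramer's rule, then use linearity of `det A`
-- in that column.
theorem det_mul_det_eq_sum_updateCol (A B : Matrix ι ι R) (i : ι) :
    A.det * B.det =
      ∑ j, (A.updateCol i (B.col j)).det * (B.updateCol j (A.col i)).det := by
  have expand_col : ∑ j, B.cramer (A.col i) j • B.col j = B.det • A.col i := by
    rw [← Matrix.mulVec_cramer]
    ext p
    simp [Matrix.mulVec, dotProduct, mul_comm]
  calc A.det * B.det = A.cramer (B.det • A.col i) i := by
        rw [map_smul, Pi.smul_apply, Matrix.cramer_apply, smul_eq_mul, mul_comm]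
        congr 2
        exact (A.updateCol_eq_self i).symm
    _ = ∑ j, (A.updateCol i (B.col j)).det * (B.updateCol j (A.col i)).det := by
        rw [← expand_col, map_sum, Finset.sum_apply]
        refine Finset.sum_congr rfl fun j _ => ?_
        rw [map_smul, Pi.smul_apply, smul_eq_mul, mul_comm, Matrix.cramer_apply,
          Matrix.cramer_apply]

end Determinants

section Labels

variable {R ι L : Type*} [CommRing R] [DecidableEq ι]

/-- Functions of a family of labels that are alternating in it. As labels carry no linear
structure, `AlternatingMap` does not apply; both conditions are required so that the notion is the
right one when `2` is not invertible. -/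
structure IsAlternating (φ : (ι → L) → R) : Prop where
  eq_zero_of_eq : ∀ (c : ι → L) {i j : ι}, i ≠ j → c i = c j → φ c = 0
  comp_swap : ∀ (c : ι → L) {i j : ι}, i ≠ j → φ (c ∘ swap i j) = -φ c

variable [Fintype ι]

/-- The determinant whose `j`-th column consists of the entries of `v` with label `c j`; it is
`ρ_N(k)` for the labels `c j = k + j`. -/
def labelDet (v : ι → L → R) (c : ι → L) : R :=
  (Matrix.of fun i j => v i (c j)).det

theorem labelDet_update (v : ι → L → R) (c : ι → L) (j : ι) (l : L) :
    labelDet v (update c j l) =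
      ((Matrix.of fun i j => v i (c j)).updateCol j fun i => v i l).det := by
  unfold labelDet
  congr 1
  ext p q
  by_cases hq : q = j <;> simp [hq]

theorem isAlternating_labelDet (v : ι → L → R) : IsAlternating (labelDet v) where
  eq_zero_of_eq c _ _ hij hc := Matrix.det_zero_of_column_eq hij fun p => by simp [hc]
  comp_swap c i j hij := by
    have := Matrix.det_permute' (swap i j) (Matrix.of fun p q => v p (c q))
    rw [Perm.sign_swap hij, Units.val_neg, Units.val_one, Int.cast_neg, Int.cast_one,
      neg_one_mul] at this
    exact this

theorem labelDet_mul_labelDet (v : ι → L → R) (b c : ι → L) (i : ι) :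
    labelDet v b * labelDet v c =
      ∑ j, labelDet v (update b i (c j)) * labelDet v (update c j (b i)) := by
  simp only [labelDet_update]
  exact det_mul_det_eq_sum_updateCol _ _ i

/-- The operator summing, over all positions, the values at the labels with that one position
raised by `m`. It is the action on determinants of a flow with `∂ f_n = f_{n+m}`. -/
def shiftSum [Add L] (m : L) : Module.End R ((ι → L) → R) where
  toFun φ c := ∑ j, φ (update c j (c j + m))
  map_add' _ _ := by ext; simp [Finset.sum_add_distrib]
  map_smul' _ _ := by ext; simp [Finset.mul_sum]

theorem shiftSum_apply [Add L] (m : L) (φ : (ι → L) → R) (c : ι → L) :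
    shiftSum m φ c = ∑ j, φ (update c j (c j + m)) := rfl

protected theorem IsAlternating.shiftSum [Add L] {φ : (ι → L) → R} (hφ : IsAlternating φ) (m : L) :
    IsAlternating (shiftSum m φ) := by
  have term_swap (c : ι → L) {i j : ι} (hij : i ≠ j) (l : ι) :
      φ (update (c ∘ swap i j) (swap i j l) ((c ∘ swap i j) (swap i j l) + m)) =
        -φ (update c l (c l + m)) := by
    rw [← hφ.comp_swap _ hij, update_comp_equiv]
    simp
  refine ⟨fun c i j hij hc => ?_, fun c i j hij => ?_⟩
  · have c_swap : c ∘ swap i j = c := by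
      ext l
      rcases eq_or_ne l i with rfl | hi
      · simp [hc]
      rcases eq_or_ne l j with rfl | hj
      · simp [hc]
      · simp [swap_apply_of_ne_of_ne hi hj]
    refine Finset.sum_involution (fun l _ => swap i j l) (fun l _ => ?_) (fun l _ hl hfix => hl ?_)
      (fun _ _ => Finset.mem_univ _) (fun _ _ => swap_apply_self _ _ _)
    · have := term_swap c hij l
      rw [c_swap] at this
      rw [this, add_neg_cancel]
    · have hi : i ≠ l := by rintro rfl; exact hij (by simpa using hfix.symm)
      have hj : j ≠ l := by rintro rfl; exact hij (by simpa using hfix)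
      exact hφ.eq_zero_of_eq _ hij (by simp [hi, hj, hc])
  · rw [shiftSum_apply, shiftSum_apply, ← Finset.sum_neg_distrib, ← Equiv.sum_comp (swap i j)]
    exact Finset.sum_congr rfl fun l _ => term_swap c hij l

end Labels

section RunLabels

variable {R : Type*} [CommRing R] {n m : ℕ}

/-- The labels `K, …, K + n - 1` followed by the labels `K + n + w j`. Measuring the last labels
from `K + n` makes `w = ![0, 1, …]` the case of consecutive labels. -/
def runLabels (n : ℕ) (K : ℤ) (w : Fin m → ℤ) : Fin (n + m) → ℤ :=
  Fin.append (fun j => K + j) fun j => K + n + w j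

@[simp]
theorem runLabels_castAdd (K : ℤ) (w : Fin m → ℤ) (j : Fin n) :
    runLabels n K w (Fin.castAdd m j) = K + j := Fin.append_left _ _ _

@[simp]
theorem runLabels_natAdd (K : ℤ) (w : Fin m → ℤ) (j : Fin m) :
    runLabels n K w (Fin.natAdd n j) = K + n + w j := Fin.append_right _ _ _

theorem runLabels_three (K : ℤ) :
    runLabels n K ![0, 1, 2] = fun j : Fin (n + 3) => K + (j : ℤ) := by
  ext j
  refine Fin.addCases (fun j => by simp) (fun j => ?_) j
  fin_cases j <;> simp [add_assoc]

theorem update_runLabels_natAdd (K : ℤ) (w : Fin m → ℤ) (i : Fin m) (e : ℤ) :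
    update (runLabels n K w) (Fin.natAdd n i) (K + n + e) = runLabels n K (update w i e) := by
  ext j
  refine Fin.addCases (fun j => ?_) (fun j => ?_) j
  · rw [update_of_ne (Fin.ne_of_lt (by simp [Fin.lt_def]; omega))]
    simp
  · by_cases hj : j = i <;> simp [hj]

theorem IsAlternating.comp_runLabels {φ : (Fin (n + m) → ℤ) → R} (hφ : IsAlternating φ) (K : ℤ) :
    IsAlternating fun w : Fin m → ℤ => φ (runLabels n K w) where
  eq_zero_of_eq w i j hij hw :=
    hφ.eq_zero_of_eq _ (i := Fin.natAdd n i) (j := Fin.natAdd n j) (by simpa using hij)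
      (by simp [hw])
  comp_swap w i j hij := by
    rw [← hφ.comp_swap _ (i := Fin.natAdd n i) (j := Fin.natAdd n j) (by simpa using hij)]
    congr 1
    ext l
    refine Fin.addCases (fun l => ?_) (fun l => ?_) l
    · have (p : Fin m) : Fin.castAdd m l ≠ Fin.natAdd n p :=
        Fin.ne_of_lt (by simp [Fin.lt_def]; omega)
      simp [swap_apply_of_ne_of_ne (this i) (this j)]
    · rw [comp_apply, (Fin.natAdd_injective m n).swap_apply]
      simp

-- Raising a label of the initial run by `d` produces a repeated label.
theorem shiftSum_runLabels {φ : (Fin (n + m) → ℤ) → R} (hφ : IsAlternating φ) {d : ℤ} (hd : 0 < d)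
    (K : ℤ) {w : Fin m → ℤ} (hw : ∀ r, 0 ≤ r → r < d → ∃ i, w i = r) :
    shiftSum d φ (runLabels n K w) = shiftSum d (fun w => φ (runLabels n K w)) w := by
  have run_term_eq_zero (j : Fin n) :
      φ (update (runLabels n K w) (Fin.castAdd m j)
        (runLabels n K w (Fin.castAdd m j) + d)) = 0 := by
    obtain ⟨l, hlj, hl⟩ : ∃ l, l ≠ Fin.castAdd m j ∧ runLabels n K w l = K + j + d := by
      lift d to ℕ using hd.le
      by_cases hjd : j + d < n
      · refine ⟨Fin.castAdd m ⟨j + d, hjd⟩, by simp [Fin.ext_iff]; omega, ?_⟩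
        rw [runLabels_castAdd, Nat.cast_add, add_assoc]
      · obtain ⟨i, hi⟩ := hw (j + d - n) (by omega) (by omega)
        exact ⟨Fin.natAdd n i, by simp [Fin.ext_iff]; omega, by simp [hi]; ring⟩
    exact hφ.eq_zero_of_eq _ hlj (by simp [hlj, hl])
  simp only [shiftSum_apply, Fin.sum_univ_add, run_term_eq_zero, Finset.sum_const_zero, zero_add,
    runLabels_natAdd, add_assoc (K + (n : ℤ)), update_runLabels_natAdd]

-- The label `K + n` of the second run is the label `w l` of the first one.
theorem labelDet_runLabels_mul (v : Fin (n + m) → ℤ → R) (K : ℤ) (w u : Fin m → ℤ) {i l : Fin m}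
    (hli : l ≠ i) (hl : w l = 0) :
    labelDet v (runLabels n K w) * labelDet v (runLabels n (K + 1) u) =
      ∑ j, labelDet v (runLabels n K (update w i (u j + 1))) *
        labelDet v (runLabels n (K + 1) (update u j (w i - 1))) := by
  have run_term_eq_zero (j : Fin n) :
      labelDet v (update (runLabels n K w) (Fin.natAdd n i)
        (runLabels n (K + 1) u (Fin.castAdd m j))) = 0 := by
    obtain ⟨p, hpi, hp⟩ : ∃ p, p ≠ Fin.natAdd n i ∧ runLabels n K w p = K + 1 + j := by
      by_cases hj : j + 1 < n
      · refine ⟨Fin.castAdd m ⟨j + 1, hj⟩, by simp [Fin.ext_iff]; omega, ?_⟩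
        rw [runLabels_castAdd]
        push_cast
        ring
      · exact ⟨Fin.natAdd n l, by simpa using hli, by simp [hl]; omega⟩
    exact (isAlternating_labelDet v).eq_zero_of_eq _ hpi (by simp [hpi, hp])
  have label_up (j : Fin m) : K + 1 + n + u j = K + n + (u j + 1) := by ring
  have label_down : K + n + w i = K + 1 + n + (w i - 1) := by ring
  rw [labelDet_mul_labelDet v _ _ (Fin.natAdd n i), Fin.sum_univ_add]
  simp only [run_term_eq_zero, zero_mul, Finset.sum_const_zero, zero_add]
  simp only [runLabels_natAdd]
  simp only [label_up, update_runLabels_natAdd]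
  simp only [label_down, update_runLabels_natAdd]

end RunLabels

section ThreeLabels

variable {R : Type*} [CommRing R] {n : ℕ}

theorem update_vec_three_zero (p q r e : ℤ) : update ![p, q, r] 0 e = ![e, q, r] := by
  ext j; fin_cases j <;> rfl

theorem update_vec_three_one (p q r e : ℤ) : update ![p, q, r] 1 e = ![p, e, r] := by
  ext j; fin_cases j <;> rfl

theorem update_vec_three_two (p q r e : ℤ) : update ![p, q, r] 2 e = ![p, q, e] := by
  ext j; fin_cases j <;> rfl

theorem shiftSum_vec_three (φ : (Fin 3 → ℤ) → R) (d p q r : ℤ) :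
    shiftSum d φ ![p, q, r] = φ ![p + d, q, r] + φ ![p, q + d, r] + φ ![p, q, r + d] := by
  rw [shiftSum_apply, Fin.sum_univ_three, update_vec_three_zero, update_vec_three_one,
    update_vec_three_two]
  rfl

namespace IsAlternating

variable {φ : (Fin (n + 3) → ℤ) → R}

theorem runLabels_swap_zero_one (hφ : IsAlternating φ) (K p q r : ℤ) :
    φ (runLabels n K ![q, p, r]) = -φ (runLabels n K ![p, q, r]) := by
  rw [← (hφ.comp_runLabels K).comp_swap _ (show (0 : Fin 3) ≠ 1 by decide)]
  congr 2
  ext j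
  fin_cases j <;> rfl

theorem runLabels_swap_one_two (hφ : IsAlternating φ) (K p q r : ℤ) :
    φ (runLabels n K ![p, r, q]) = -φ (runLabels n K ![p, q, r]) := by
  rw [← (hφ.comp_runLabels K).comp_swap _ (show (1 : Fin 3) ≠ 2 by decide)]
  congr 2
  ext j
  fin_cases j <;> rfl

theorem runLabels_repeat_zero_one (hφ : IsAlternating φ) (K p r : ℤ) :
    φ (runLabels n K ![p, p, r]) = 0 :=
  (hφ.comp_runLabels K).eq_zero_of_eq _ (show (0 : Fin 3) ≠ 1 by decide) rfl

theorem runLabels_repeat_zero_two (hφ : IsAlternating φ) (K p q : ℤ) :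
    φ (runLabels n K ![p, q, p]) = 0 :=
  (hφ.comp_runLabels K).eq_zero_of_eq _ (show (0 : Fin 3) ≠ 2 by decide) rfl

theorem runLabels_repeat_one_two (hφ : IsAlternating φ) (K p q : ℤ) :
    φ (runLabels n K ![p, q, q]) = 0 :=
  (hφ.comp_runLabels K).eq_zero_of_eq _ (show (1 : Fin 3) ≠ 2 by decide) rfl

theorem shiftSum_one_runLabels (hφ : IsAlternating φ) (K q r : ℤ) :
    shiftSum 1 φ (runLabels n K ![0, q, r]) = φ (runLabels n K ![1, q, r])
      + φ (runLabels n K ![0, q + 1, r]) + φ (runLabels n K ![0, q, r + 1]) := by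
  rw [shiftSum_runLabels hφ one_pos K fun r _ _ => ⟨0, by simp; omega⟩, shiftSum_vec_three,
    zero_add]

theorem shiftSum_two_runLabels (hφ : IsAlternating φ) (K r : ℤ) :
    shiftSum 2 φ (runLabels n K ![0, 1, r]) = φ (runLabels n K ![2, 1, r])
      + φ (runLabels n K ![0, 3, r]) + φ (runLabels n K ![0, 1, r + 2]) := by
  rw [shiftSum_runLabels hφ two_pos K ?_, shiftSum_vec_three, zero_add]
  · norm_num
  · intro s _ _
    obtain rfl | rfl : s = 0 ∨ s = 1 := by omega
    exacts [⟨0, rfl⟩, ⟨1, rfl⟩]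

theorem shiftSum_one_consecutive (hφ : IsAlternating φ) (K : ℤ) :
    shiftSum 1 φ (runLabels n K ![0, 1, 2]) = φ (runLabels n K ![0, 1, 3]) := by
  simp [hφ.shiftSum_one_runLabels, hφ.runLabels_repeat_zero_one, hφ.runLabels_repeat_one_two]

theorem shiftSum_one_sq_consecutive (hφ : IsAlternating φ) (K : ℤ) :
    shiftSum 1 (shiftSum 1 φ) (runLabels n K ![0, 1, 2]) =
      φ (runLabels n K ![0, 2, 3]) + φ (runLabels n K ![0, 1, 4]) := by
  rw [(hφ.shiftSum 1).shiftSum_one_consecutive]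
  simp [hφ.shiftSum_one_runLabels, hφ.runLabels_repeat_zero_one]

theorem shiftSum_one_cube_consecutive (hφ : IsAlternating φ) (K : ℤ) :
    shiftSum 1 (shiftSum 1 (shiftSum 1 φ)) (runLabels n K ![0, 1, 2]) =
      φ (runLabels n K ![1, 2, 3]) + 2 * φ (runLabels n K ![0, 2, 4])
        + φ (runLabels n K ![0, 1, 5]) := by
  rw [(hφ.shiftSum 1).shiftSum_one_sq_consecutive]
  simp only [hφ.shiftSum_one_runLabels, hφ.runLabels_repeat_zero_one,
    hφ.runLabels_repeat_one_two, Int.reduceAdd, add_zero, zero_add]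
  ring

theorem shiftSum_two_consecutive (hφ : IsAlternating φ) (K : ℤ) :
    shiftSum 2 φ (runLabels n K ![0, 1, 2]) =
      φ (runLabels n K ![0, 1, 4]) - φ (runLabels n K ![0, 2, 3]) := by
  rw [hφ.shiftSum_two_runLabels, hφ.runLabels_repeat_zero_two, hφ.runLabels_swap_one_two,
    show (2 : ℤ) + 2 = 4 from rfl]
  ring

theorem shiftSum_one_shiftSum_two_consecutive (hφ : IsAlternating φ) (K : ℤ) :
    shiftSum 1 (shiftSum 2 φ) (runLabels n K ![0, 1, 2]) =
      φ (runLabels n K ![0, 1, 5]) - φ (runLabels n K ![1, 2, 3]) := by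
  rw [(hφ.shiftSum 2).shiftSum_one_consecutive, hφ.shiftSum_two_runLabels,
    hφ.runLabels_repeat_one_two, hφ.runLabels_swap_zero_one,
    show (3 : ℤ) + 2 = 5 from rfl]
  ring

theorem shiftSum_three_consecutive (hφ : IsAlternating φ) (K : ℤ) :
    shiftSum 3 φ (runLabels n K ![0, 1, 2]) = φ (runLabels n K ![1, 2, 3])
      - φ (runLabels n K ![0, 2, 4]) + φ (runLabels n K ![0, 1, 5]) := by
  rw [shiftSum_runLabels hφ three_pos K ?_, shiftSum_vec_three]
  · simp only [zero_add, Int.reduceAdd]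
    rw [hφ.runLabels_swap_zero_one K 1 3 2, hφ.runLabels_swap_one_two K 1 2 3,
      hφ.runLabels_swap_one_two K 0 2 4]
    ring
  · intro s _ _
    obtain rfl | rfl | rfl : s = 0 ∨ s = 1 ∨ s = 2 := by omega
    exacts [⟨0, rfl⟩, ⟨1, rfl⟩, ⟨2, rfl⟩]

end IsAlternating

theorem labelDet_three_term_plucker (v : Fin (n + 3) → ℤ → R) (K p q r s : ℤ) :
    labelDet v (runLabels n K ![0, p + 1, q + 1]) * labelDet v (runLabels n (K + 1) ![p, r, s]) =
      labelDet v (runLabels n K ![0, p + 1, r + 1]) * labelDet v (runLabels n (K + 1) ![p, q, s])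
        + labelDet v (runLabels n K ![0, p + 1, s + 1])
          * labelDet v (runLabels n (K + 1) ![p, r, q]) := by
  rw [labelDet_runLabels_mul v K _ _ (i := 2) (l := 0) (by decide) rfl, Fin.sum_univ_three]
  simp only [update_vec_three_zero, update_vec_three_one, update_vec_three_two, Matrix.cons_val,
    (isAlternating_labelDet v).runLabels_repeat_one_two, add_sub_cancel_right, zero_mul, zero_add]

theorem labelDet_plucker_012_024 (v : Fin (n + 3) → ℤ → R) (K : ℤ) :
    labelDet v (runLabels n K ![0, 1, 2]) * labelDet v (runLabels n (K + 1) ![0, 2, 4]) =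
      labelDet v (runLabels n K ![0, 1, 3]) * labelDet v (runLabels n (K + 1) ![0, 1, 4])
        - labelDet v (runLabels n K ![0, 1, 5])
          * labelDet v (runLabels n (K + 1) ![0, 1, 2]) := by
  have plucker := labelDet_three_term_plucker v K 0 1 2 4
  rw [(isAlternating_labelDet v).runLabels_swap_one_two _ 0 1 2] at plucker
  simp only [zero_add, Int.reduceAdd] at plucker
  linear_combination plucker

theorem labelDet_plucker_012_123 (v : Fin (n + 3) → ℤ → R) (K : ℤ) :
    labelDet v (runLabels n K ![0, 1, 2]) * labelDet v (runLabels n (K + 1) ![1, 2, 3]) =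
      labelDet v (runLabels n K ![0, 2, 3]) * labelDet v (runLabels n (K + 1) ![0, 1, 3])
        - labelDet v (runLabels n K ![0, 2, 4])
          * labelDet v (runLabels n (K + 1) ![0, 1, 2]) := by
  have h := isAlternating_labelDet v
  have plucker := labelDet_three_term_plucker v K 1 0 2 3
  rw [h.runLabels_swap_zero_one _ 0 1 3, h.runLabels_swap_one_two _ 1 0 2,
    h.runLabels_swap_zero_one _ 0 1 2] at plucker
  simp only [Int.reduceAdd, h.runLabels_swap_one_two _ 0 1 2] at plucker
  linear_combination -plucker

end ThreeLabels

section HirotaSymbol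

variable {R : Type*} [CommRing R]

/-- The value of `(D_x³ + D_t + 3 D_x D_z) φ(c)·φ(d)` when `∂_x`, `∂_t`, `∂_z` act on the family
`φ` through the operators `X`, `T`, `Z`. -/
def hirotaSymbol {C : Type*} (X T Z : Module.End R (C → R)) (φ : C → R) (c d : C) : R :=
  (X (X (X φ)) c * φ d - 3 * X (X φ) c * X φ d + 3 * X φ c * X (X φ) d - φ c * X (X (X φ)) d)
    + (T φ c * φ d - φ c * T φ d)
    + 3 * (X (Z φ) c * φ d - X φ c * Z φ d - Z φ c * X φ d + φ c * X (Z φ) d)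

theorem hirotaSymbol_add_smul_one {C : Type*} (X T Z : Module.End R (C → R)) (a : R) (φ : C → R)
    (c d : C) : hirotaSymbol (X + a • 1) T Z φ c d = hirotaSymbol X T Z φ c d := by
  simp only [hirotaSymbol, LinearMap.add_apply, LinearMap.smul_apply, Module.End.one_apply,
    map_add, map_smul, Pi.add_apply, Pi.smul_apply, smul_eq_mul]
  ring

theorem hirotaSymbol_smul {C : Type*} (X T Z : Module.End R (C → R)) (a : R) (φ : C → R)
    (c d : C) : hirotaSymbol X T Z (a • φ) c d = a ^ 2 * hirotaSymbol X T Z φ c d := by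
  simp only [hirotaSymbol, map_smul, Pi.smul_apply, smul_eq_mul]
  ring

theorem hirotaSymbol_labelDet {N : ℕ} (v : Fin N → ℤ → R) (k : ℤ) :
    hirotaSymbol (shiftSum 1) ((-4 : R) • shiftSum 3) (shiftSum 2) (labelDet v)
      (fun j => k + 1 + (j : ℤ)) (fun j => k + (j : ℤ)) = 0 := by
  match N, v with
  | 0, v => simp [hirotaSymbol, shiftSum_apply]
  | 1, v =>
    simp only [hirotaSymbol, shiftSum_apply, labelDet, Matrix.det_fin_one, Matrix.of_apply,
      Fin.sum_univ_one, update_self, LinearMap.smul_apply, Pi.smul_apply, smul_eq_mul,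
      Fin.val_eq_zero]
    ring_nf
  | 2, v =>
    simp only [hirotaSymbol, shiftSum_apply, labelDet, Matrix.det_fin_two, Matrix.of_apply,
      Fin.sum_univ_two, update_self, update_of_ne, ne_eq, zero_ne_one, one_ne_zero,
      not_false_eq_true, Fin.val_zero, Fin.val_one, Nat.cast_zero, Nat.cast_one,
      LinearMap.smul_apply, Pi.smul_apply, smul_eq_mul]
    ring_nf
  | n + 3, v =>
    have h := isAlternating_labelDet v
    simp only [hirotaSymbol, ← runLabels_three, LinearMap.smul_apply, Pi.smul_apply, smul_eq_mul,
      h.shiftSum_one_consecutive, h.shiftSum_one_sq_consecutive, h.shiftSum_one_cube_consecutive,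
      h.shiftSum_two_consecutive, h.shiftSum_one_shiftSum_two_consecutive,
      h.shiftSum_three_consecutive]
    linear_combination 6 * labelDet_plucker_012_024 v k - 6 * labelDet_plucker_012_123 v k

end HirotaSymbol

section Derivatives

variable {𝕜 : Type*} [NontriviallyNormedField 𝕜]

theorem hasDerivAt_det {ι : Type*} [Fintype ι] [DecidableEq ι] {M : 𝕜 → Matrix ι ι 𝕜}
    {M' : Matrix ι ι 𝕜} {x : 𝕜} (hM : ∀ i j, HasDerivAt (fun s => M s i j) (M' i j) x) :
    HasDerivAt (fun s => (M s).det) (∑ j, ((M x).updateCol j (M'.col j)).det) x := by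
  let detRows : ContinuousMultilinearMap 𝕜 (fun _ : ι => ι → 𝕜) 𝕜 :=
    ⟨Matrix.detRowAlternating.toMultilinearMap, Continuous.matrix_det continuous_id⟩
  have hasDerivAt_columns : HasDerivAt (fun s j i => M s i j) (fun j i => M' i j) x :=
    hasDerivAt_pi.2 fun j => hasDerivAt_pi.2 fun i => hM i j
  have := (detRows.hasFDerivAt fun j i => M x i j).comp_hasDerivAt x hasDerivAt_columns
  rw [ContinuousMultilinearMap.linearDeriv_apply] at this
  refine (this.congr_deriv (Finset.sum_congr rfl fun j _ => ?_)).congr_of_eventuallyEq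
    (.of_forall fun s => (Matrix.det_transpose _).symm)
  rw [← Matrix.det_transpose, ← Matrix.updateRow_transpose]
  rfl

theorem hasDerivAt_labelDet {ι L : Type*} [Fintype ι] [DecidableEq ι] [Add L]
    {F : 𝕜 → ι → L → 𝕜} {m : L} {a x : 𝕜}
    (hF : ∀ i n, HasDerivAt (fun s => F s i n) (a * F x i (n + m)) x) (c : ι → L) :
    HasDerivAt (fun s => labelDet (F s) c) ((a • shiftSum m) (labelDet (F x)) c) x := by
  refine (hasDerivAt_det (M := fun s => Matrix.of fun i j => F s i (c j))
    (M' := Matrix.of fun i j => a * F x i (c j + m)) fun i j => hF i (c j)).congr_deriv ?_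
  rw [LinearMap.smul_apply, Pi.smul_apply, shiftSum_apply, Finset.smul_sum]
  refine Finset.sum_congr rfl fun j _ => ?_
  rw [labelDet_update, smul_eq_mul, ← Matrix.det_updateCol_smul]
  rfl

/-- `X` may be applied under the derivative sign to families differentiated coordinatewise. For
infinite `C` this is not automatic, since `X` need not be continuous. -/
def CommutesWithDeriv {C : Type*} (X : Module.End 𝕜 (C → 𝕜)) : Prop :=
  ∀ ⦃φ : 𝕜 → C → 𝕜⦄ ⦃φ' : C → 𝕜⦄ ⦃x : 𝕜⦄, (∀ c, HasDerivAt (fun s => φ s c) (φ' c) x) →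
    ∀ c, HasDerivAt (fun s => X (φ s) c) (X φ' c) x

theorem commutesWithDeriv_shiftSum {ι L : Type*} [Fintype ι] [DecidableEq ι] [Add L] (m : L) :
    CommutesWithDeriv (shiftSum (ι := ι) (R := 𝕜) m) :=
  fun _ _ _ hφ _ => HasDerivAt.fun_sum fun _ _ => hφ _

theorem CommutesWithDeriv.add_smul_one {C : Type*} {X : Module.End 𝕜 (C → 𝕜)}
    (hX : CommutesWithDeriv X) (a : 𝕜) : CommutesWithDeriv (X + a • 1) :=
  fun _ _ _ hφ c => (hX hφ c).add ((hφ c).const_mul a)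

theorem hasDerivAt_const_smul {C : Type*} {X : Module.End 𝕜 (C → 𝕜)} {Φ : 𝕜 → C → 𝕜} {x : 𝕜}
    (hΦ : ∀ c, HasDerivAt (fun s => Φ s c) (X (Φ x) c) x) (b : 𝕜) (c : C) :
    HasDerivAt (fun s => (b • Φ s) c) (X (b • Φ x) c) x := by
  rw [map_smul]
  exact (hΦ c).const_mul b

theorem hasDerivAt_gauge_smul {C : Type*} {X : Module.End 𝕜 (C → 𝕜)} {Φ : 𝕜 → C → 𝕜} {x : 𝕜}
    (hΦ : ∀ c, HasDerivAt (fun s => Φ s c) (X (Φ x) c) x) {g : 𝕜 → 𝕜} {a : 𝕜}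
    (hg : HasDerivAt g (a * g x) x) (c : C) :
    HasDerivAt (fun s => (g s • Φ s) c) ((X + a • 1) (g x • Φ x) c) x := by
  refine (hg.mul (hΦ c)).congr_deriv ?_
  simp only [LinearMap.add_apply, LinearMap.smul_apply, Module.End.one_apply, map_smul,
    Pi.add_apply, Pi.smul_apply, smul_eq_mul]
  ring

end Derivatives

section HirotaEquation

variable {𝕜 : Type*} [NontriviallyNormedField 𝕜]

/-- `(D_x³ + D_t + 3 D_x D_z) u·v`, written out in partial derivatives, for functions of
`(x, t, z)`. -/
noncomputable def hirotaForm (u v : 𝕜 → 𝕜 → 𝕜 → 𝕜) (x t z : 𝕜) : 𝕜 :=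
  (deriv (fun x' => deriv (fun x'' => deriv (fun s => u s t z) x'') x') x * v x t z
    - 3 * deriv (fun x' => deriv (fun x'' => u x'' t z) x') x * deriv (fun x' => v x' t z) x
    + 3 * deriv (fun x' => u x' t z) x * deriv (fun x' => deriv (fun x'' => v x'' t z) x') x
    - u x t z * deriv (fun x' => deriv (fun x'' => deriv (fun s => v s t z) x'') x') x)
  + (deriv (fun t' => u x t' z) t * v x t z - u x t z * deriv (fun t' => v x t' z) t)
  + 3 * (deriv (fun z' => deriv (fun x' => u x' t z') x) z * v x t z
    - deriv (fun x' => u x' t z) x * deriv (fun z' => v x t z') z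
    - deriv (fun z' => u x t z') z * deriv (fun x' => v x' t z) x
    + u x t z * deriv (fun z' => deriv (fun x' => v x' t z') x) z)

theorem hirotaForm_eq_hirotaSymbol {C : Type*} {X T Z : Module.End 𝕜 (C → 𝕜)}
    (hX : CommutesWithDeriv X) {Φ : 𝕜 → 𝕜 → 𝕜 → C → 𝕜}
    (hΦx : ∀ x t z c, HasDerivAt (fun s => Φ s t z c) (X (Φ x t z) c) x)
    (hΦt : ∀ x t z c, HasDerivAt (fun s => Φ x s z c) (T (Φ x t z) c) t)
    (hΦz : ∀ x t z c, HasDerivAt (fun s => Φ x t s c) (Z (Φ x t z) c) z) (c d : C) (x t z : 𝕜) :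
    hirotaForm (fun x t z => Φ x t z c) (fun x t z => Φ x t z d) x t z =
      hirotaSymbol X T Z (Φ x t z) c d := by
  have deriv_x (x t z c) := (hΦx x t z c).deriv
  have deriv_xx (x t z c) := (hX (hΦx x t z) c).deriv
  have deriv_xxx (x t z c) := (hX (hX (hΦx x t z)) c).deriv
  have deriv_t (x t z c) := (hΦt x t z c).deriv
  have deriv_z (x t z c) := (hΦz x t z c).deriv
  have deriv_xz (x t z c) := (hX (hΦz x t z) c).deriv
  simp only [hirotaForm, hirotaSymbol, deriv_x, deriv_xx, deriv_xxx, deriv_t, deriv_z, deriv_xz]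

theorem stmt_11_general {N : ℕ} {f : Fin N → ℤ → 𝕜 → 𝕜 → 𝕜 → 𝕜}
    (hfx : ∀ i n x t z, HasDerivAt (fun s => f i n s t z) (f i (n + 1) x t z) x)
    (hft : ∀ i n x t z, HasDerivAt (fun s => f i n x s z) (-4 * f i (n + 3) x t z) t)
    (hfz : ∀ i n x t z, HasDerivAt (fun s => f i n x t s) (f i (n + 2) x t z) z)
    {g : 𝕜 → 𝕜} {a : 𝕜} (hg : ∀ x, HasDerivAt g (a * g x) x) (k : ℤ) (x t z : 𝕜) :
    hirotaForm
      (fun x t z => g x * (Matrix.of fun i j : Fin N => f i (k + 1 + (j : ℤ)) x t z).det)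
      (fun x t z => g x * (Matrix.of fun i j : Fin N => f i (k + (j : ℤ)) x t z).det)
      x t z = 0 := by
  let W (x t z : 𝕜) : (Fin N → ℤ) → 𝕜 := labelDet fun i n => f i n x t z
  have hasDerivAt_x (x t z : 𝕜) (c : Fin N → ℤ) :
      HasDerivAt (fun s => W s t z c) (shiftSum 1 (W x t z) c) x := by
    simpa using hasDerivAt_labelDet (F := fun s i n => f i n s t z) (m := 1) (a := 1)
      (fun i n => by simpa using hfx i n x t z) c
  have hasDerivAt_t (x t z : 𝕜) (c : Fin N → ℤ) :
      HasDerivAt (fun s => W x s z c) (((-4 : 𝕜) • shiftSum 3) (W x t z) c) t :=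
    hasDerivAt_labelDet (F := fun s i n => f i n x s z) (fun i n => hft i n x t z) c
  have hasDerivAt_z (x t z : 𝕜) (c : Fin N → ℤ) :
      HasDerivAt (fun s => W x t s c) (shiftSum 2 (W x t z) c) z := by
    simpa using hasDerivAt_labelDet (F := fun s i n => f i n x t s) (m := 2) (a := 1)
      (fun i n => by simpa using hfz i n x t z) c
  calc _ = hirotaSymbol (shiftSum 1 + a • 1) ((-4 : 𝕜) • shiftSum 3) (shiftSum 2) (g x • W x t z)
        (fun j => k + 1 + (j : ℤ)) (fun j => k + (j : ℤ)) :=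
      hirotaForm_eq_hirotaSymbol (Φ := fun x t z => g x • W x t z)
        ((commutesWithDeriv_shiftSum 1).add_smul_one a)
        (fun x t z => hasDerivAt_gauge_smul (hasDerivAt_x x t z) (hg x))
        (fun x t z => hasDerivAt_const_smul (hasDerivAt_t x t z) (g x))
        (fun x t z => hasDerivAt_const_smul (hasDerivAt_z x t z) (g x)) _ _ x t z
    _ = 0 := by
      rw [hirotaSymbol_add_smul_one, hirotaSymbol_smul, hirotaSymbol_labelDet, mul_zero]

end HirotaEquation

/-- For smooth functions `f_n^{(i)}(x,t,y,z)` with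
`∂_x f_n = f_{n+1}`, `∂_z f_n = f_{n+2}`, `∂_t f_n = -4 f_{n+3}`, `∂_y f_n = f_{n-1}`,
and `σ(k) = e^{-xy} ρ_N(k)` where `ρ_N(k) = det[f^{(i)}_{k+j-1}]`, the bilinear equation
`(D_x³ + D_t + 3 D_x D_z) σ(k+1)·σ(k) = 0` holds. -/
theorem stmt_11 (N : ℕ) (hN : 0 < N) (f : Fin N → ℤ → ℝ → ℝ → ℝ → ℝ → ℝ)
    (hsm : ∀ i n, ContDiff ℝ (⊤ : ℕ∞)
      (fun p : ℝ × ℝ × ℝ × ℝ => f i n p.1 p.2.1 p.2.2.1 p.2.2.2))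
    (hfx : ∀ i n x t y z, deriv (fun x' => f i n x' t y z) x = f i (n + 1) x t y z)
    (hfz : ∀ i n x t y z, deriv (fun z' => f i n x t y z') z = f i (n + 2) x t y z)
    (hft : ∀ i n x t y z, deriv (fun t' => f i n x t' y z) t = -4 * f i (n + 3) x t y z)
    (hfy : ∀ i n x t y z, deriv (fun y' => f i n x t y' z) y = f i (n - 1) x t y z)
    (σ : ℤ → ℝ → ℝ → ℝ → ℝ → ℝ)
    (hσ : ∀ k x t y z, σ k x t y z =
      Real.exp (-(x * y)) *
        Matrix.det (Matrix.of fun i j : Fin N => f i (k + (j.val : ℤ)) x t y z)) :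
    ∀ (k : ℤ) (x t y z : ℝ),
      (deriv (fun x' => deriv (fun x'' => deriv (fun s => σ (k + 1) s t y z) x'') x') x
          * σ k x t y z
        - 3 * deriv (fun x' => deriv (fun x'' => σ (k + 1) x'' t y z) x') x
            * deriv (fun x' => σ k x' t y z) x
        + 3 * deriv (fun x' => σ (k + 1) x' t y z) x
            * deriv (fun x' => deriv (fun x'' => σ k x'' t y z) x') x
        - σ (k + 1) x t y z
            * deriv (fun x' => deriv (fun x'' => deriv (fun s => σ k s t y z) x'') x') x)
      + (deriv (fun t' => σ (k + 1) x t' y z) t * σ k x t y z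
          - σ (k + 1) x t y z * deriv (fun t' => σ k x t' y z) t)
      + 3 * (deriv (fun z' => deriv (fun x' => σ (k + 1) x' t y z') x) z * σ k x t y z
          - deriv (fun x' => σ (k + 1) x' t y z) x * deriv (fun z' => σ k x t y z') z
          - deriv (fun z' => σ (k + 1) x t y z') z * deriv (fun x' => σ k x' t y z) x
          + σ (k + 1) x t y z * deriv (fun z' => deriv (fun x' => σ k x' t y z') x) z)
      = 0 := by
  intro k x t y z
  obtain rfl : σ = _ := by
    ext k x t y z
    exact hσ k x t y z
  have hdiff i n := (hsm i n).differentiable (by simp)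
  refine stmt_11_general (f := fun i n x t z => f i n x t y z) (a := -y) (fun i n x t z => ?_)
    (fun i n x t z => ?_) (fun i n x t z => ?_) (fun x => ?_) k x t z
  · rw [← hfx]
    exact ((hdiff i n).comp (f := fun s => (s, t, y, z)) (by fun_prop) x).hasDerivAt
  · rw [← hft]
    exact ((hdiff i n).comp (f := fun s => (x, s, y, z)) (by fun_prop) t).hasDerivAt
  · rw [← hfz]
    exact ((hdiff i n).comp (f := fun s => (x, t, y, s)) (by fun_prop) z).hasDerivAt
  · simpa [mul_comm] using ((hasDerivAt_id x).mul_const y).neg.exp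
end
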